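/- arXiv:2102.07080 — 2 statements merged into one kernel-verified Lean document; each statement's English description precedes it below -/
import Mathlib

section
/- Let 𝔞 be a cofinite monomial ideal in k[x₁,…,x_d] and let c > 0 be a rational number. Then there exists a polynomial p ∈ ℚ[X] of degree at most d−1 such that m(c+n) = p(n) for every natural number n. (Monomial case of Theorem 3.1: the multiplicity function n ↦ m(c+n) is a polynomial in n of degree less than d.) -/
open Set Filter Pointwise

/-- The map sending a vector of natural number exponents to the corresponding
real vector. -/
noncomputable def expToReal (d : ℕ) (v : Fin d → ℕ) : Fin d → ℝ := fun i => (v i : ℝ)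

/-- The Newton polyhedron of a monomial ideal with exponent set `S`:
the convex hull in `ℝ^d` of the exponent vectors. -/
noncomputable def newtonPoly (d : ℕ) (S : Set (Fin d → ℕ)) : Set (Fin d → ℝ) :=
  convexHull ℝ (expToReal d '' S)

/-- The multiplicity `m(c)` of `c > 0` as a (candidate) jumping number of the monomial
ideal with exponent set `S`: the number of `v ∈ ℕ^d` with `v + 𝟏` on the boundary part
`c•P(𝔞) \ int(c•P(𝔞))` of the dilated Newton polyhedron. -/
noncomputable def multJump (d : ℕ) (S : Set (Fin d → ℕ)) (c : ℝ) : ℕ :=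
  Nat.card {v : Fin d → ℕ |
    expToReal d v + 1 ∈ c • newtonPoly d S \ interior (c • newtonPoly d S)}

/-- The binomial coefficient `(n + e).choose k` is a polynomial of degree at most `k` in `n`. -/
theorem exists_polynomial_eval_eq_choose (e k : ℕ) :
    ∃ p : Polynomial ℚ, p.natDegree ≤ k ∧ ∀ n : ℕ, p.eval (n : ℚ) = ((n + e).choose k : ℕ) := by
  refine ⟨Polynomial.C ((k.factorial : ℚ)⁻¹) *
    (descPochhammer ℚ k).comp (Polynomial.X + Polynomial.C (e : ℚ)), ?_, fun n => ?_⟩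
  · refine (Polynomial.natDegree_C_mul_le _ _).trans ?_
    rw [Polynomial.natDegree_comp, descPochhammer_natDegree, Polynomial.natDegree_X_add_C, mul_one]
  · have h : ((n : ℚ) + e) = ((n + e : ℕ) : ℚ) := by push_cast; rfl
    rw [Polynomial.eval_mul, Polynomial.eval_comp, Polynomial.eval_add, Polynomial.eval_X,
      Polynomial.eval_C, Polynomial.eval_C, h, descPochhammer_eval_eq_descFactorial,
      Nat.descFactorial_eq_factorial_mul_choose]
    have := Nat.factorial_ne_zero k
    push_cast
    field_simp

/-- Stars and bars, as a polynomial in a shift of the total: the number of `u ∈ ℕ^σ` with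
`∑ u + t = c + n` is polynomial in `n` as soon as `t < c + #σ`. -/
theorem exists_polynomial_card_sum_eq {ι : Type*} [Fintype ι] [DecidableEq ι] (σ : Finset ι)
    (hσ : σ.Nonempty) (c t : ℝ) (ht : t < c + σ.card) :
    ∃ p : Polynomial ℚ, p.natDegree ≤ σ.card - 1 ∧ ∀ n : ℕ,
      {u : ι → ℕ | (∀ i ∉ σ, u i = 0) ∧ ∑ i, (u i : ℝ) + t = c + n}.Finite ∧
      (Nat.card {u : ι → ℕ | (∀ i ∉ σ, u i = 0) ∧ ∑ i, (u i : ℝ) + t = c + n} : ℚ) =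
        p.eval (n : ℚ) := by
  have hk : 1 ≤ σ.card := hσ.card_pos
  by_cases hj : ∃ j : ℤ, c - t = j
  · obtain ⟨j, hj⟩ := hj
    have hjk : (-(σ.card : ℤ)) < j := by
      have : (-(σ.card : ℝ)) < j := by linarith
      exact_mod_cast this
    obtain ⟨e, he⟩ : ∃ e : ℕ, (e : ℤ) = j + (σ.card - 1) :=
      ⟨(j + (σ.card - 1)).toNat, Int.toNat_of_nonneg (by omega)⟩
    obtain ⟨p, hp, hpe⟩ := exists_polynomial_eval_eq_choose e (σ.card - 1)
    refine ⟨p, hp, fun n => ?_⟩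
    have hset : {u : ι → ℕ | (∀ i ∉ σ, u i = 0) ∧ ∑ i, (u i : ℝ) + t = c + n} =
        {u : ι → ℕ | (∀ i ∉ σ, u i = 0) ∧ ((∑ i ∈ σ, u i : ℕ) : ℤ) = n + j} := by
      ext u
      refine and_congr_right fun hu => ?_
      have h1 : ∑ i, (u i : ℝ) = ((∑ i ∈ σ, u i : ℕ) : ℝ) := by
        push_cast
        refine (Finset.sum_subset (Finset.subset_univ σ) fun i _ hi => ?_).symm
        simp [hu i hi]
      have h2 : (((∑ i ∈ σ, u i : ℕ) : ℤ) = n + j) ↔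
          ((∑ i ∈ σ, u i : ℕ) : ℝ) = n + j := by
        rw [← Int.cast_inj (α := ℝ)]
        simp
      rw [h1, h2]
      constructor <;> intro h <;> linarith
    rw [hset, hpe]
    rcases lt_or_ge ((n : ℤ) + j) 0 with hneg | hnn
    · have hempty : {u : ι → ℕ | (∀ i ∉ σ, u i = 0) ∧ ((∑ i ∈ σ, u i : ℕ) : ℤ) = n + j} = ∅ := by
        ext u
        simp only [Set.mem_ofPred_eq, Set.mem_empty_iff_false, iff_false]
        rintro ⟨-, h⟩
        omega
      rw [hempty, Nat.choose_eq_zero_of_lt (by omega)]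
      simp
    · obtain ⟨m, hm⟩ := Int.eq_ofNat_of_zero_le hnn
      have hfs : {u : ι → ℕ | (∀ i ∉ σ, u i = 0) ∧ ((∑ i ∈ σ, u i : ℕ) : ℤ) = n + j} =
          (Finset.piAntidiag σ m : Set (ι → ℕ)) := by
        ext u
        simp only [Set.mem_ofPred_eq, Finset.mem_coe, Finset.mem_piAntidiag, hm, Nat.cast_inj]
        rw [and_comm]
        refine and_congr_right fun _ => forall_congr' fun i => ?_
        exact not_imp_comm
      rw [hfs]
      refine ⟨Finset.finite_toSet _, ?_⟩
      have hcard : (Finset.piAntidiag σ m).card = (σ.card + m - 1).choose m := by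
        rw [← Finset.card_finsuppAntidiag_nat_eq_choose, Finset.finsuppAntidiag, Finset.card_map,
          Finset.card_attach]
      rw [Nat.card_coe_set_eq, Set.ncard_coe_finset, hcard]
      have h3 : n + e = σ.card + m - 1 := by omega
      rw [h3, ← Nat.choose_symm (by omega : m ≤ σ.card + m - 1)]
      have h4 : σ.card + m - 1 - m = σ.card - 1 := by omega
      rw [h4]
  · refine ⟨0, by simp, fun n => ?_⟩
    have hempty : {u : ι → ℕ | (∀ i ∉ σ, u i = 0) ∧ ∑ i, (u i : ℝ) + t = c + n} = ∅ := by
      ext u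
      simp only [Set.mem_ofPred_eq, Set.mem_empty_iff_false, iff_false]
      rintro ⟨-, h⟩
      refine hj ⟨(∑ i, (u i : ℤ)) - n, ?_⟩
      push_cast
      linarith
    rw [hempty]
    simp

/-- Ehrhart-type count on an open simplicial cone: if `G` is invariant under integral translations,
the number of points of `G` with support `σ`, positive on `σ` and with coordinate sum `c + n`
is polynomial in `n`, of degree less than `#σ`. -/
theorem exists_polynomial_card_openCone {ι : Type*} [Fintype ι] [DecidableEq ι] (σ : Finset ι)
    (hσ : σ.Nonempty) (G : Set (ι → ℝ))
    (hG : ∀ (a : ι → ℝ) (u : ι → ℕ), (fun i => a i + u i) ∈ G ↔ a ∈ G)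
    (hfin : {b : ι → ℝ | b ∈ G ∧ (∀ i ∈ σ, 0 < b i ∧ b i ≤ 1) ∧ ∀ i ∉ σ, b i = 0}.Finite)
    (c : ℝ) (hc : 0 < c) :
    ∃ p : Polynomial ℚ, p.natDegree ≤ σ.card - 1 ∧ ∀ n : ℕ,
      {a : ι → ℝ | a ∈ G ∧ (∀ i ∈ σ, 0 < a i) ∧ (∀ i ∉ σ, a i = 0) ∧
        ∑ i, a i = c + n}.Finite ∧
      (Nat.card {a : ι → ℝ | a ∈ G ∧ (∀ i ∈ σ, 0 < a i) ∧ (∀ i ∉ σ, a i = 0) ∧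
        ∑ i, a i = c + n} : ℚ) = p.eval (n : ℚ) := by
  set B : Set (ι → ℝ) := {b | b ∈ G ∧ (∀ i ∈ σ, 0 < b i ∧ b i ≤ 1) ∧ ∀ i ∉ σ, b i = 0} with hB
  have : Fintype B := hfin.fintype
  have hbox : ∀ b : B, ∑ i, b.1 i < c + σ.card := by
    rintro ⟨b, -, hb1, hb0⟩
    have : ∑ i, b i ≤ σ.card := by
      rw [← Finset.sum_subset (Finset.subset_univ σ) fun i _ hi => hb0 i hi]
      simpa using Finset.sum_le_card_nsmul σ b 1 fun i hi => (hb1 i hi).2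
    simp only
    linarith
  choose p hp hpc using fun b : B => exists_polynomial_card_sum_eq σ hσ c _ (hbox b)
  refine ⟨∑ b, p b, Polynomial.natDegree_sum_le_of_forall_le _ _ fun b _ => hp b, fun n => ?_⟩
  set A : Set (ι → ℝ) := {a | a ∈ G ∧ (∀ i ∈ σ, 0 < a i) ∧ (∀ i ∉ σ, a i = 0) ∧
    ∑ i, a i = c + n} with hA
  let U : B → Set (ι → ℕ) := fun b =>
    {u : ι → ℕ | (∀ i ∉ σ, u i = 0) ∧ ∑ i, (u i : ℝ) + ∑ i, b.1 i = c + n}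
  have : ∀ b, Finite (U b) := fun b => (hpc b n).1
  let φ : (Σ b, U b) → A := fun q => ⟨fun i => q.1.1 i + q.2.1 i, by
    obtain ⟨⟨b, hbG, hb1, hb0⟩, u, hu0, hu⟩ := q
    refine ⟨(hG b u).2 hbG, fun i hi => ?_, fun i hi => ?_, ?_⟩
    · have := (hb1 i hi).1
      positivity
    · simp [hb0 i hi, hu0 i hi]
    · rw [Finset.sum_add_distrib, add_comm]
      exact hu⟩
  have hφ : Function.Bijective φ := by
    constructor
    · rintro ⟨⟨b, hbG, hb1, hb0⟩, u, hu0, hu⟩ ⟨⟨b', hbG', hb1', hb0'⟩, u', hu0', hu'⟩ h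
      have h : ∀ i, b i + u i = b' i + u' i := fun i => congrFun (congrArg Subtype.val h) i
      have huu : u = u' := by
        funext i
        by_cases hi : i ∈ σ
        · have h1 := hb1 i hi
          have h2 := hb1' i hi
          have h3 : (u i : ℝ) < u' i + 1 := by linarith [h i]
          have h4 : (u' i : ℝ) < u i + 1 := by linarith [h i]
          have h3 : u i < u' i + 1 := by exact_mod_cast h3
          have h4 : u' i < u i + 1 := by exact_mod_cast h4
          omega
        · rw [hu0 i hi, hu0' i hi]
      subst huu
      have hbb : b = b' := funext fun i => by linarith [h i]
      subst hbb
      rfl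
    · rintro ⟨a, haG, ha1, ha0, ha⟩
      set u : ι → ℕ := fun i => ⌈a i⌉₊ - 1 with hu
      have hu0 : ∀ i ∉ σ, u i = 0 := fun i hi => by simp [hu, ha0 i hi]
      have hu1 : ∀ i ∈ σ, (u i : ℝ) = ⌈a i⌉₊ - 1 := fun i hi => by
        have : 1 ≤ ⌈a i⌉₊ := Nat.ceil_pos.2 (ha1 i hi)
        simp [hu, Nat.cast_sub this]
      refine ⟨⟨⟨fun i => a i - u i, ?_, fun i hi => ?_, fun i hi => ?_⟩, u, hu0, ?_⟩, ?_⟩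
      · rw [← hG _ u]
        simpa using haG
      · have h1 := Nat.ceil_lt_add_one (ha1 i hi).le
        have h2 := Nat.le_ceil (a i)
        simp only [hu1 i hi]
        constructor <;> linarith
      · simp [hu0 i hi, ha0 i hi]
      · simp only [Finset.sum_sub_distrib]
        linarith
      · simp [φ]
  refine ⟨Finite.of_surjective φ hφ.2, ?_⟩
  rw [← Nat.card_eq_of_bijective φ hφ, Nat.card_sigma, Polynomial.eval_finsetSum]
  push_cast
  exact Finset.sum_congr rfl fun b _ => (hpc b n).2

/-- `lexNonpos l z` says that the vector of values at `z` of the functionals in `l` is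
lexicographically nonpositive. -/
def lexNonpos {E : Type*} [AddCommGroup E] [Module ℝ E] [TopologicalSpace E] :
    List (E →L[ℝ] ℝ) → E → Prop
  | [], _ => True
  | f :: l, z => f z < 0 ∨ (f z = 0 ∧ lexNonpos l z)

theorem lexNonpos_of_smul {E : Type*} [AddCommGroup E] [Module ℝ E] [TopologicalSpace E]
    {l : List (E →L[ℝ] ℝ)} {z : E} {r : ℝ} (hr : 0 < r) (h : lexNonpos l (r • z)) :
    lexNonpos l z := by
  induction l with
  | nil => trivial
  | cons f l ih =>
    simp only [lexNonpos, map_smul, smul_eq_mul] at h ⊢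
    rcases h with h | ⟨h, h'⟩
    · exact Or.inl (by nlinarith)
    · exact Or.inr ⟨(mul_eq_zero.1 h).resolve_left hr.ne', ih h'⟩

theorem lexNonpos_antisymm {E : Type*} [AddCommGroup E] [Module ℝ E] [TopologicalSpace E]
    {l : List (E →L[ℝ] ℝ)} {z : E} (h : lexNonpos l z) (h' : lexNonpos l (-z)) :
    ∀ f ∈ l, f z = 0 := by
  induction l with
  | nil => simp
  | cons f l ih =>
    simp only [lexNonpos, map_neg] at h h'
    have hf : f z = 0 := by
      rcases h with h | h <;> rcases h' with h' | h' <;> linarith [h, h']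
    intro g hg
    rcases List.mem_cons.1 hg with rfl | hg
    · exact hf
    · exact ih (h.resolve_left (by simp [hf])).2 (h'.resolve_left (by simp [hf])).2 g hg

/-- A nonempty compact set has a lexicographically maximal point. -/
theorem IsCompact.exists_lexMax {E : Type*} [AddCommGroup E] [Module ℝ E] [TopologicalSpace E]
    (l : List (E →L[ℝ] ℝ)) {K : Set E} (hK : IsCompact K) (hne : K.Nonempty) :
    ∃ a ∈ K, ∀ b ∈ K, lexNonpos l (b - a) := by
  induction l generalizing K with
  | nil => exact ⟨hne.some, hne.some_mem, fun _ _ => trivial⟩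
  | cons f l ih =>
    obtain ⟨m, hm, hmax⟩ := hK.exists_isMaxOn hne f.continuous.continuousOn
    obtain ⟨a, ⟨haK, hfa⟩, ha⟩ := ih (K := K ∩ f ⁻¹' {f m})
      (hK.inter_right (isClosed_singleton.preimage f.continuous)) ⟨m, hm, rfl⟩
    have hfa : f a = f m := hfa
    refine ⟨a, haK, fun b hb => ?_⟩
    have hle : f b ≤ f m := hmax hb
    simp only [lexNonpos, map_sub, hfa]
    rcases hle.lt_or_eq with h | h
    · exact Or.inl (by linarith)
    · exact Or.inr ⟨by linarith, ha b ⟨hb, h⟩⟩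

section ConicReps

variable {ι : Type*} [Fintype ι] {d : ℕ}

/-- The nonnegative coefficient vectors representing `x` as a conic combination of the `s i`. -/
def conicReps (s : ι → Fin d → ℕ) (x : Fin d → ℝ) : Set (ι → ℝ) :=
  {a | (∀ i, 0 ≤ a i) ∧ ∑ i, a i • expToReal d (s i) = x}

/-- The coordinate sum, followed by the coordinates in some order. -/
noncomputable def lexFunctionals (ι : Type*) [Fintype ι] : List ((ι → ℝ) →L[ℝ] ℝ) :=
  (∑ i, ContinuousLinearMap.proj i) :: (Finset.univ : Finset ι).toList.map
    fun i => ContinuousLinearMap.proj i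

/-- `a` is the lexicographically maximal conic representation of `x`. -/
def IsLexMaxRep (s : ι → Fin d → ℕ) (x : Fin d → ℝ) (a : ι → ℝ) : Prop :=
  a ∈ conicReps s x ∧ ∀ b ∈ conicReps s x, lexNonpos (lexFunctionals ι) (b - a)

theorem IsLexMaxRep.eq {s : ι → Fin d → ℕ} {x : Fin d → ℝ} {a b : ι → ℝ}
    (ha : IsLexMaxRep s x a) (hb : IsLexMaxRep s x b) : a = b := by
  have h := lexNonpos_antisymm (hb.2 a ha.1) (by simpa using ha.2 b hb.1)
  funext i
  have := h (ContinuousLinearMap.proj i) (by simp [lexFunctionals])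
  simpa [sub_eq_zero] using this

theorem IsLexMaxRep.sum_le {s : ι → Fin d → ℕ} {x : Fin d → ℝ} {a b : ι → ℝ}
    (ha : IsLexMaxRep s x a) (hb : b ∈ conicReps s x) : ∑ i, b i ≤ ∑ i, a i := by
  have h := ha.2 b hb
  simp only [lexFunctionals, lexNonpos, sum_apply,
    ContinuousLinearMap.proj_apply, Pi.sub_apply, Finset.sum_sub_distrib] at h
  rcases h with h | h
  · linarith
  · linarith [h.1]

/-- Lexicographic maximality only depends on the support. -/
theorem IsLexMaxRep.of_support {s : ι → Fin d → ℕ} {x : Fin d → ℝ} {a a' : ι → ℝ}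
    (ha : IsLexMaxRep s x a) (h0 : ∀ i, 0 ≤ a' i) (hsupp : ∀ i, a i = 0 → a' i = 0) :
    IsLexMaxRep s (∑ i, a' i • expToReal d (s i)) a' := by
  refine ⟨⟨h0, rfl⟩, fun b hb => ?_⟩
  obtain ⟨ε, hε, hεa⟩ : ∃ ε : ℝ, 0 < ε ∧ ∀ i, ε * a' i ≤ a i := by
    have h : ∀ᶠ ε : ℝ in nhdsWithin 0 (Ioi 0), ∀ i, ε * a' i ≤ a i := by
      refine eventually_all.2 fun i => ?_
      rcases (ha.1.1 i).eq_or_lt with h | h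
      · simp [hsupp i h.symm, ← h]
      · have hc : Tendsto (fun ε : ℝ => ε * a' i) (nhdsWithin 0 (Ioi 0)) (nhds (0 * a' i)) :=
          ((continuous_id.mul continuous_const).tendsto 0).mono_left nhdsWithin_le_nhds
        rw [zero_mul] at hc
        exact (hc.eventually_lt_const h).mono fun _ => le_of_lt
    obtain ⟨ε, h1, h2⟩ := (h.and self_mem_nhdsWithin).exists
    exact ⟨ε, h2, h1⟩
  refine lexNonpos_of_smul hε ?_
  have hmem : a + ε • (b - a') ∈ conicReps s x := by
    refine ⟨fun i => ?_, ?_⟩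
    · have := mul_nonneg hε.le (hb.1 i)
      have := hεa i
      simp only [Pi.add_apply, Pi.smul_apply, Pi.sub_apply, smul_eq_mul]
      linarith
    · have h1 := hb.2
      simp only [Pi.add_apply, Pi.smul_apply, Pi.sub_apply, add_smul, smul_assoc, sub_smul,
        Finset.sum_add_distrib, ← Finset.smul_sum, Finset.sum_sub_distrib, h1, ha.1.2]
      simp
  simpa using ha.2 _ hmem

theorem isCompact_conicReps {s : ι → Fin d → ℕ} (hs : ∀ i, s i ≠ 0) (x : Fin d → ℝ) :
    IsCompact (conicReps s x) := by
  have hclosed : IsClosed (conicReps s x) := by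
    refine IsClosed.inter (?_ : IsClosed {a : ι → ℝ | ∀ i, 0 ≤ a i})
      (?_ : IsClosed {a : ι → ℝ | ∑ i, a i • expToReal d (s i) = x})
    · simp only [Set.ofPred_forall]
      exact isClosed_iInter fun i => isClosed_le continuous_const (continuous_apply i)
    · exact isClosed_eq (by fun_prop) continuous_const
  refine IsCompact.of_isClosed_subset (isCompact_Icc (a := (0 : ι → ℝ))
    (b := fun _ => ∑ j, x j)) hclosed ?_
  rintro a ⟨ha0, rfl⟩
  refine ⟨ha0, fun i => ?_⟩
  obtain ⟨j, hj⟩ := Function.ne_iff.1 (hs i)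
  have hj : (1 : ℝ) ≤ s i j := by exact_mod_cast Nat.one_le_iff_ne_zero.2 hj
  have hnn : ∀ i' j', 0 ≤ a i' * (s i' j' : ℝ) := fun i' j' =>
    mul_nonneg (ha0 i') (Nat.cast_nonneg _)
  simp only [Finset.sum_apply, Pi.smul_apply, smul_eq_mul, expToReal]
  calc a i ≤ a i * s i j := le_mul_of_one_le_right (ha0 i) hj
    _ ≤ ∑ i', a i' * s i' j :=
        Finset.single_le_sum (f := fun i' => a i' * (s i' j : ℝ)) (fun i' _ => hnn i' j)
          (Finset.mem_univ i)
    _ ≤ ∑ j', ∑ i', a i' * s i' j' :=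
        Finset.single_le_sum (f := fun j' => ∑ i', a i' * (s i' j' : ℝ))
          (fun j' _ => Finset.sum_nonneg fun i' _ => hnn i' j') (Finset.mem_univ j)

theorem exists_isLexMaxRep {s : ι → Fin d → ℕ} (hs : ∀ i, s i ≠ 0) {x : Fin d → ℝ}
    (hx : (conicReps s x).Nonempty) : ∃ a, IsLexMaxRep s x a :=
  (isCompact_conicReps hs x).exists_lexMax (lexFunctionals ι) hx

/-- The support of a lexicographically maximal representation indexes linearly independent
vectors. -/
theorem IsLexMaxRep.card_support_le {s : ι → Fin d → ℕ} {x : Fin d → ℝ} {a : ι → ℝ}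
    (ha : IsLexMaxRep s x a) (σ : Finset ι) (hσ : ∀ i ∈ σ, a i ≠ 0) : σ.card ≤ d := by
  classical
  have hli : LinearIndependent ℝ fun i : σ => expToReal d (s i) := by
    rw [Fintype.linearIndependent_iff]
    intro g hg
    let g' : ι → ℝ := fun i => if hi : i ∈ σ then g ⟨i, hi⟩ else 0
    have hg' : ∑ i, g' i • expToReal d (s i) = 0 := by
      rw [← hg, ← Finset.sum_subset (Finset.subset_univ σ) fun i _ hi => by simp [g', hi],
        ← Finset.sum_coe_sort]
      exact Finset.sum_congr rfl fun i _ => by simp [g']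
    have hs0 : ∀ i, a i = 0 → g' i = 0 := fun i hi => by
      have : i ∉ σ := fun h => hσ i h hi
      simp [g', this]
    have h1 := ha.of_support (a' := fun i => |g' i|) (fun i => abs_nonneg _)
      fun i hi => by simp [hs0 i hi]
    have h2 := ha.of_support (a' := fun i => |g' i| + g' i)
      (fun i => by linarith [neg_abs_le (g' i)]) fun i hi => by simp [hs0 i hi]
    simp only [add_smul, Finset.sum_add_distrib, hg', add_zero] at h2
    intro i
    have := congrFun (h1.eq h2) i
    simpa [g'] using this
  simpa using hli.fintype_card_le_finrank

/-- Given maximal representations `opt v` of all `v + 𝟏`, the number of `v` whose representation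
has support `σ` and coordinate sum `c + n` is polynomial in `n`. -/
theorem exists_polynomial_card_support_eq [DecidableEq ι] {s : ι → Fin d → ℕ}
    {opt : (Fin d → ℕ) → ι → ℝ} (hd : 1 ≤ d)
    (hopt : ∀ v, IsLexMaxRep s (expToReal d v + 1) (opt v)) (c : ℝ) (hc : 0 < c)
    (σ : Finset ι) :
    ∃ p : Polynomial ℚ, p.natDegree ≤ d - 1 ∧ ∀ n : ℕ,
      {v | (∀ i, i ∈ σ ↔ opt v i ≠ 0) ∧ ∑ i, opt v i = c + n}.Finite ∧
      (Nat.card {v | (∀ i, i ∈ σ ↔ opt v i ≠ 0) ∧ ∑ i, opt v i = c + n} : ℚ) =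
        p.eval (n : ℚ) := by
  by_cases hex : ∃ v₀, ∀ i, i ∈ σ ↔ opt v₀ i ≠ 0
  · obtain ⟨v₀, hv₀⟩ := hex
    have hmax : ∀ a : ι → ℝ, (∀ i ∈ σ, 0 < a i) → (∀ i ∉ σ, a i = 0) →
        IsLexMaxRep s (∑ i, a i • expToReal d (s i)) a := fun a h1 h0 => by
      refine (hopt v₀).of_support (fun i => ?_) fun i hi => h0 i ?_
      · by_cases hi : i ∈ σ
        · exact (h1 i hi).le
        · exact (h0 i hi).ge
      · simp [hv₀, hi]
    have hcov : ∀ j, ∃ i ∈ σ, 1 ≤ s i j := by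
      intro j
      by_contra! hcon
      have h := congrFun (hopt v₀).1.2 j
      rw [Finset.sum_apply, Finset.sum_eq_zero] at h
      · simp only [expToReal, Pi.add_apply, Pi.one_apply] at h
        have : (0 : ℝ) ≤ v₀ j := Nat.cast_nonneg _
        linarith
      · intro i _
        by_cases hi : i ∈ σ
        · have : s i j = 0 := by have := hcon i hi; omega
          simp [expToReal, this]
        · have : opt v₀ i = 0 := by simpa [hv₀] using hi
          simp [this]
    have hσ : σ.Nonempty := (hcov ⟨0, hd⟩).imp fun i hi => hi.1
    let G : Set (ι → ℝ) := {a | ∃ z : Fin d → ℤ, ∑ i, a i • expToReal d (s i) = fun j => (z j : ℝ)}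
    have hG : ∀ (a : ι → ℝ) (u : ι → ℕ), (fun i => a i + u i) ∈ G ↔ a ∈ G := by
      intro a u
      have hu : ∑ i, (u i : ℝ) • expToReal d (s i) =
          fun j => ((∑ i, (u i : ℤ) * s i j : ℤ) : ℝ) := by
        funext j
        simp [expToReal, Finset.sum_apply]
      constructor
      · rintro ⟨z, hz⟩
        refine ⟨fun j => z j - ∑ i, (u i : ℤ) * s i j, ?_⟩
        simp only [add_smul, Finset.sum_add_distrib, hu] at hz
        rw [eq_sub_of_add_eq hz]
        funext j
        simp
      · rintro ⟨z, hz⟩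
        refine ⟨fun j => z j + ∑ i, (u i : ℤ) * s i j, ?_⟩
        simp only [add_smul, Finset.sum_add_distrib, hu, hz]
        funext j
        simp
    have hfin : {b : ι → ℝ | b ∈ G ∧ (∀ i ∈ σ, 0 < b i ∧ b i ≤ 1) ∧
        ∀ i ∉ σ, b i = 0}.Finite := by
      refine Set.Finite.of_finite_image (f := fun b => ∑ i, b i • expToReal d (s i)) ?_ ?_
      · refine ((Set.finite_Icc (0 : Fin d → ℤ) (fun j => ∑ i, (s i j : ℤ))).image
          fun z j => (z j : ℝ)).subset ?_
        rintro _ ⟨b, ⟨⟨z, hz⟩, hb1, hb0⟩, rfl⟩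
        have hb : ∀ i, 0 ≤ b i ∧ b i ≤ 1 := fun i => by
          by_cases hi : i ∈ σ
          · exact ⟨(hb1 i hi).1.le, (hb1 i hi).2⟩
          · simp [hb0 i hi]
        have hzj : ∀ j, (z j : ℝ) = ∑ i, b i * s i j := fun j => by
          rw [← congrFun hz j]
          simp [expToReal, Finset.sum_apply]
        refine ⟨z, ⟨fun j => ?_, fun j => ?_⟩, hz.symm⟩
        · have : (0 : ℝ) ≤ z j := by
            rw [hzj]
            exact Finset.sum_nonneg fun i _ => mul_nonneg (hb i).1 (Nat.cast_nonneg _)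
          exact_mod_cast this
        · have : (z j : ℝ) ≤ ∑ i, (s i j : ℝ) := by
            rw [hzj]
            exact Finset.sum_le_sum fun i _ =>
              mul_le_of_le_one_left (Nat.cast_nonneg _) (hb i).2
          exact_mod_cast this
      · intro b hb b' hb' h
        have h1 := hmax b (fun i hi => (hb.2.1 i hi).1) hb.2.2
        have h2 := hmax b' (fun i hi => (hb'.2.1 i hi).1) hb'.2.2
        simp only at h
        rw [h] at h1
        exact h1.eq h2
    obtain ⟨p, hp, hpc⟩ := exists_polynomial_card_openCone σ hσ G hG hfin c hc
    have hσd := (hopt v₀).card_support_le σ fun i hi => (hv₀ i).1 hi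
    refine ⟨p, hp.trans (Nat.sub_le_sub_right hσd 1), fun n => ?_⟩
    obtain ⟨hpf, hpn⟩ := hpc n
    rw [← hpn]
    have hbij : Set.BijOn opt {v | (∀ i, i ∈ σ ↔ opt v i ≠ 0) ∧ ∑ i, opt v i = c + n}
        {a : ι → ℝ | a ∈ G ∧ (∀ i ∈ σ, 0 < a i) ∧ (∀ i ∉ σ, a i = 0) ∧
          ∑ i, a i = c + n} := by
      refine ⟨?_, ?_, ?_⟩
      · rintro v ⟨hv, hvn⟩
        refine ⟨⟨fun j => v j + 1, ?_⟩, fun i hi => ?_, fun i hi => ?_, hvn⟩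
        · rw [(hopt v).1.2]
          funext j
          simp [expToReal]
        · exact lt_of_le_of_ne ((hopt v).1.1 i) ((hv i).1 hi).symm
        · simpa [hv] using hi
      · intro v _ v' _ h
        have h1 := (hopt v).1.2
        rw [h, (hopt v').1.2] at h1
        funext j
        have := congrFun h1 j
        simpa [expToReal] using this.symm
      · rintro a ⟨⟨z, hz⟩, ha1, ha0, han⟩
        have hm := hmax a ha1 ha0
        have hz1 : ∀ j, 1 ≤ z j := by
          intro j
          obtain ⟨i, hi, hij⟩ := hcov j
          have : (0 : ℝ) < z j := by
            rw [← congrFun hz j, Finset.sum_apply]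
            refine Finset.sum_pos' (fun i' _ => ?_) ⟨i, Finset.mem_univ i, ?_⟩
            · exact mul_nonneg (hm.1.1 i') (Nat.cast_nonneg _)
            · exact mul_pos (ha1 i hi) (Nat.cast_pos.2 hij)
          have : 0 < z j := by exact_mod_cast this
          omega
        let v : Fin d → ℕ := fun j => (z j - 1).toNat
        have hv : ∑ i, a i • expToReal d (s i) = expToReal d v + 1 := by
          rw [hz]
          funext j
          have h : ((z j - 1).toNat : ℤ) = z j - 1 :=
            Int.toNat_of_nonneg (by have := hz1 j; omega)
          have h : (((z j - 1).toNat : ℤ) : ℝ) = ((z j - 1 : ℤ) : ℝ) := by rw [h]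
          simp only [Int.cast_natCast] at h
          simp only [expToReal, v, Pi.add_apply, Pi.one_apply, h]
          push_cast
          ring
        rw [hv] at hm
        have hav : opt v = a := (hopt v).eq hm
        refine ⟨v, ⟨fun i => ?_, ?_⟩, hav⟩
        · rw [hav]
          exact ⟨fun hi => (ha1 i hi).ne', not_imp_comm.1 (ha0 i)⟩
        · rw [hav, han]
    refine ⟨hbij.finite_iff_finite.2 hpf, ?_⟩
    rw [Nat.card_congr hbij.equiv]
  · refine ⟨0, by simp, fun n => ?_⟩
    have hempty : {v | (∀ i, i ∈ σ ↔ opt v i ≠ 0) ∧ ∑ i, opt v i = c + n} = ∅ := by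
      ext v
      simp only [Set.mem_ofPred_eq, Set.mem_empty_iff_false, iff_false]
      rintro ⟨h, -⟩
      exact hex ⟨v, h⟩
    rw [hempty]
    simp

theorem exists_polynomial_card_sum_opt_eq {s : ι → Fin d → ℕ}
    {opt : (Fin d → ℕ) → ι → ℝ} (hd : 1 ≤ d)
    (hopt : ∀ v, IsLexMaxRep s (expToReal d v + 1) (opt v)) (c : ℝ) (hc : 0 < c) :
    ∃ p : Polynomial ℚ, p.natDegree ≤ d - 1 ∧ ∀ n : ℕ,
      (Nat.card {v | ∑ i, opt v i = c + n} : ℚ) = p.eval (n : ℚ) := by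
  classical
  choose p hp hpc using exists_polynomial_card_support_eq hd hopt c hc
  refine ⟨∑ σ, p σ, Polynomial.natDegree_sum_le_of_forall_le _ _ fun σ _ => hp σ, fun n => ?_⟩
  let F : Finset ι → Set (Fin d → ℕ) := fun σ =>
    {v | (∀ i, i ∈ σ ↔ opt v i ≠ 0) ∧ ∑ i, opt v i = c + n}
  have : ∀ σ, Finite (F σ) := fun σ => (hpc σ n).1
  let φ : (Σ σ, F σ) → {v | ∑ i, opt v i = c + n} := fun q => ⟨q.2.1, q.2.2.2⟩
  have hφ : Function.Bijective φ := by
    constructor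
    · rintro ⟨σ, v, hv, hn⟩ ⟨σ', v', hv', hn'⟩ h
      have h : v = v' := congrArg Subtype.val h
      subst h
      have hσ : σ = σ' := Finset.ext fun i => (hv i).trans (hv' i).symm
      subst hσ
      rfl
    · rintro ⟨v, hv⟩
      exact ⟨⟨Finset.univ.filter fun i => opt v i ≠ 0, v, fun i => by simp, hv⟩, rfl⟩
  rw [← Nat.card_eq_of_bijective φ hφ, Nat.card_sigma, Polynomial.eval_finsetSum]
  push_cast
  exact Finset.sum_congr rfl fun σ _ => (hpc σ n).2

end ConicReps

/-- `x` is a conic combination of vectors of `V` with coefficient sum at least `t`. -/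
def HasConicRep {d : ℕ} (V : Finset (Fin d → ℕ)) (x : Fin d → ℝ) (t : ℝ) : Prop :=
  ∃ a ∈ conicReps (fun v : V => v.1) x, t ≤ ∑ i, a i

namespace HasConicRep

variable {d : ℕ} {V : Finset (Fin d → ℕ)}

theorem add {x y : Fin d → ℝ} {t t' : ℝ} (hx : HasConicRep V x t) (hy : HasConicRep V y t') :
    HasConicRep V (x + y) (t + t') := by
  obtain ⟨a, ⟨ha, rfl⟩, hat⟩ := hx
  obtain ⟨b, ⟨hb, rfl⟩, hbt⟩ := hy
  refine ⟨a + b, ⟨fun i => add_nonneg (ha i) (hb i), ?_⟩, ?_⟩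
  · simp [add_smul, Finset.sum_add_distrib]
  · simpa [Finset.sum_add_distrib] using add_le_add hat hbt

theorem smul {x : Fin d → ℝ} {t r : ℝ} (hr : 0 ≤ r) (hx : HasConicRep V x t) :
    HasConicRep V (r • x) (r * t) := by
  obtain ⟨a, ⟨ha, rfl⟩, hat⟩ := hx
  refine ⟨r • a, ⟨fun i => mul_nonneg hr (ha i), ?_⟩, ?_⟩
  · simp only [Pi.smul_apply, smul_assoc, Finset.smul_sum]
  · simpa [← Finset.mul_sum] using mul_le_mul_of_nonneg_left hat hr

theorem mono {x : Fin d → ℝ} {t t' : ℝ} (hx : HasConicRep V x t) (h : t' ≤ t) :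
    HasConicRep V x t' :=
  let ⟨a, ha, hat⟩ := hx
  ⟨a, ha, h.trans hat⟩

theorem of_mem {v : Fin d → ℕ} (hv : v ∈ V) : HasConicRep V (expToReal d v) 1 := by
  classical
  refine ⟨Pi.single ⟨v, hv⟩ 1, ⟨fun i => ?_, ?_⟩, by simp⟩
  · exact (Pi.single_nonneg.2 zero_le_one : (0 : V → ℝ) ≤ Pi.single ⟨v, hv⟩ 1) i
  · rw [Finset.sum_eq_single_of_mem ⟨v, hv⟩ (Finset.mem_univ _) fun i _ hi => by simp [hi]]
    simp

theorem of_nonneg {N : ℕ} (hN : 0 < N) (hV : ∀ i, Pi.single i N ∈ V) {x : Fin d → ℝ}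
    (hx : ∀ i, 0 ≤ x i) : HasConicRep V x 0 := by
  have hzero : HasConicRep V 0 0 := ⟨0, ⟨fun _ => le_rfl, by simp⟩, by simp⟩
  have hsum : ∀ s : Finset (Fin d),
      HasConicRep V (∑ i ∈ s, (x i / N) • expToReal d (Pi.single i N)) 0 := by
    intro s
    induction s using Finset.induction_on with
    | empty => simpa using hzero
    | insert i s hi ih =>
      rw [Finset.sum_insert hi]
      have h := (of_mem (hV i)).smul (div_nonneg (hx i) (Nat.cast_nonneg N))
      exact (h.add ih).mono (by have := hx i; positivity)
  have hx' : x = ∑ i, (x i / N) • expToReal d (Pi.single i N) := by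
    funext j
    rw [Finset.sum_apply, Finset.sum_eq_single_of_mem j (Finset.mem_univ j)]
    · have : (N : ℝ) ≠ 0 := by positivity
      simp [expToReal, this]
    · intro i _ hij
      simp [expToReal, Pi.single_eq_of_ne hij.symm]
  rw [hx']
  exact hsum _

end HasConicRep

section Newton

variable {d : ℕ} {S : Set (Fin d → ℕ)}

theorem smul_mem_newtonPoly (hS : ∀ v ∈ S, ∀ w : Fin d → ℕ, v + w ∈ S) {t : ℝ} (ht : 1 ≤ t)
    {y : Fin d → ℝ} (hy : y ∈ newtonPoly d S) : t • y ∈ newtonPoly d S := by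
  have hconv : Convex ℝ (newtonPoly d S) := convex_convexHull ℝ _
  suffices newtonPoly d S ⊆ (fun y => t • y) ⁻¹' newtonPoly d S from this hy
  refine convexHull_min ?_ (hconv.linear_preimage (t • LinearMap.id : (Fin d → ℝ) →ₗ[ℝ] _))
  rintro _ ⟨v, hv, rfl⟩
  obtain ⟨n, hn⟩ := exists_nat_gt t
  have hn1 : (1 : ℝ) < n := ht.trans_lt hn
  have hv1 : expToReal d v ∈ newtonPoly d S := subset_convexHull ℝ _ ⟨v, hv, rfl⟩
  have hvn : (n : ℝ) • expToReal d v ∈ newtonPoly d S := by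
    refine subset_convexHull ℝ _ ⟨n • v, ?_, ?_⟩
    · obtain ⟨m, rfl⟩ : ∃ m, n = m + 1 := ⟨n - 1, by
        have : 1 < n := by exact_mod_cast hn1
        omega⟩
      rw [succ_nsmul']
      exact hS v hv _
    · funext j
      simp [expToReal]
  have h := hconv hv1 hvn (a := (n - t) / (n - 1)) (b := (t - 1) / (n - 1))
    (div_nonneg (by linarith) (by linarith)) (div_nonneg (by linarith) (by linarith))
    (by rw [← add_div]; exact (div_eq_one_iff_eq (by linarith)).2 (by ring))
  have hn0 : (n : ℝ) - 1 ≠ 0 := by linarith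
  change t • expToReal d v ∈ newtonPoly d S
  convert h using 1
  rw [smul_smul, ← add_smul]
  congr 1
  field_simp
  ring

variable {V : Finset (Fin d → ℕ)}

theorem HasConicRep.mem_smul_newtonPoly (hS : ∀ v ∈ S, ∀ w : Fin d → ℕ, v + w ∈ S)
    (hVS : ∀ v ∈ V, v ∈ S) {c : ℝ} (hc : 0 < c) {x : Fin d → ℝ} (hx : HasConicRep V x c) :
    x ∈ c • newtonPoly d S := by
  obtain ⟨a, ⟨ha, rfl⟩, hac⟩ := hx
  set T := ∑ i, a i with hT
  have hT0 : 0 < T := hc.trans_le hac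
  have hmem : ∑ i, (a i / T) • expToReal d i.1 ∈ newtonPoly d S :=
    (convex_convexHull ℝ _).sum_mem (fun i _ => div_nonneg (ha i) hT0.le)
      (by rw [← Finset.sum_div]; exact div_self hT0.ne')
      fun i _ => subset_convexHull ℝ _ ⟨i.1, hVS i.1 i.2, rfl⟩
  refine ⟨_, smul_mem_newtonPoly hS ((one_le_div hc).2 hac) hmem, ?_⟩
  simp only [Finset.smul_sum, smul_smul]
  refine Finset.sum_congr rfl fun i _ => ?_
  congr 1
  field_simp

theorem hasConicRep_of_mem_smul_newtonPoly
    (hSV : ∀ v ∈ S, HasConicRep V (expToReal d v) 1) {c : ℝ} (hc : 0 < c) {x : Fin d → ℝ}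
    (hx : x ∈ c • newtonPoly d S) : HasConicRep V x c := by
  obtain ⟨y, hy, rfl⟩ := hx
  have h : newtonPoly d S ⊆ {y | HasConicRep V y 1} := by
    refine convexHull_min ?_ ?_
    · rintro _ ⟨v, hv, rfl⟩
      exact hSV v hv
    · intro y hy z hz a b ha hb hab
      have := (HasConicRep.smul ha hy).add (HasConicRep.smul hb hz)
      rwa [mul_one, mul_one, hab] at this
  simpa using HasConicRep.smul hc.le (h hy)

/-- The boundary points of `c • P` in the open orthant are those for which `c` is the largest
coefficient sum of a conic representation. -/
theorem mem_smul_newtonPoly_diff_interior_iff (hS : ∀ v ∈ S, ∀ w : Fin d → ℕ, v + w ∈ S)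
    (hVS : ∀ v ∈ V, v ∈ S) (hSV : ∀ v ∈ S, HasConicRep V (expToReal d v) 1)
    (hnn : ∀ x : Fin d → ℝ, (∀ i, 0 ≤ x i) → HasConicRep V x 0) {c : ℝ} (hc : 0 < c)
    {x : Fin d → ℝ} (hx : ∀ i, 0 < x i) :
    x ∈ c • newtonPoly d S \ interior (c • newtonPoly d S) ↔
      HasConicRep V x c ∧ ∀ t > c, ¬ HasConicRep V x t := by
  refine and_congr ⟨hasConicRep_of_mem_smul_newtonPoly hSV hc,
    fun h => h.mem_smul_newtonPoly hS hVS hc⟩ ?_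
  have hint : x ∈ interior (c • newtonPoly d S) ↔ ∃ t > c, HasConicRep V x t := by
    constructor
    · intro h
      have hev : ∀ᶠ r : ℝ in nhdsWithin 1 (Iio 1), r • x ∈ c • newtonPoly d S := by
        have hc1 : Tendsto (fun r : ℝ => r • x) (nhdsWithin 1 (Iio 1)) (nhds ((1 : ℝ) • x)) :=
          ((continuous_id.smul continuous_const).tendsto 1).mono_left nhdsWithin_le_nhds
        rw [one_smul] at hc1
        exact hc1 (mem_interior_iff_mem_nhds.1 h)
      have hpos : ∀ᶠ r : ℝ in nhdsWithin 1 (Iio 1), 0 < r :=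
        nhdsWithin_le_nhds (lt_mem_nhds one_pos)
      obtain ⟨r, ⟨hr, hr0⟩, hr1⟩ := ((hev.and hpos).and self_mem_nhdsWithin).exists
      have hr1 : r < 1 := hr1
      have hrep := (hasConicRep_of_mem_smul_newtonPoly hSV hc hr).smul (inv_nonneg.2 hr0.le)
      rw [smul_smul, inv_mul_cancel₀ hr0.ne', one_smul] at hrep
      exact ⟨r⁻¹ * c, lt_mul_of_one_lt_left hc ((one_lt_inv₀ hr0).2 hr1), hrep⟩
    · rintro ⟨t, htc, ht⟩
      have ht0 : 0 < t := hc.trans htc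
      have hr1 : c / t < 1 := (div_lt_one ht0).2 htc
      refine mem_interior.2 ⟨Set.univ.pi fun i => Ioi (c / t * x i), ?_,
        isOpen_set_pi Set.finite_univ fun i _ => isOpen_Ioi, fun i _ => ?_⟩
      · intro y hy
        have hy : ∀ i, c / t * x i < y i := fun i => hy i trivial
        have h := (ht.smul (div_pos hc ht0).le).add
          (hnn (y - (c / t) • x) fun i => by simpa using (hy i).le)
        rw [add_sub_cancel, div_mul_cancel₀ _ ht0.ne', add_zero] at h
        exact h.mem_smul_newtonPoly hS hVS hc
      · exact mul_lt_of_lt_one_left (hx i) hr1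
  rw [hint]
  push Not
  rfl

/-- Finitely many exponents of a cofinite monomial ideal, among them a power of each variable,
generate its Newton polyhedron. -/
theorem exists_finset_generating (hcof : (Sᶜ : Set (Fin d → ℕ)).Finite) :
    ∃ V : Finset (Fin d → ℕ), (∀ v ∈ V, v ∈ S) ∧
      (∀ x : Fin d → ℝ, (∀ i, 0 ≤ x i) → HasConicRep V x 0) ∧
      (∀ v ∈ S, HasConicRep V (expToReal d v) 1) ∧ (0 ∈ S → 0 ∈ V) := by
  classical
  obtain ⟨b, hb⟩ := hcof.bddAbove
  obtain ⟨N, hN⟩ : ∃ N : ℕ, N = ∑ i, b i + 1 := ⟨_, rfl⟩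
  have hbig : ∀ v : Fin d → ℕ, ∀ i, N ≤ v i → v ∈ S := by
    intro v i hi
    by_contra hv
    have h1 : v i ≤ b i := hb hv i
    have h2 : b i ≤ ∑ i, b i := Finset.single_le_sum (fun _ _ => Nat.zero_le _) (Finset.mem_univ i)
    omega
  let V : Finset (Fin d → ℕ) := (Finset.Icc 0 fun _ => N).filter (· ∈ S)
  have hV : ∀ v, v ∈ V ↔ (∀ i, v i ≤ N) ∧ v ∈ S := fun v => by
    simp [V, Pi.le_def]
  have hnn : ∀ x : Fin d → ℝ, (∀ i, 0 ≤ x i) → HasConicRep V x 0 := fun x hx => by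
    refine HasConicRep.of_nonneg (N := N) (by omega) (fun i => (hV _).2 ⟨fun j => ?_, ?_⟩) hx
    · by_cases h : j = i
      · subst h; simp
      · simp [Pi.single_eq_of_ne h]
    · exact hbig _ i (by simp)
  refine ⟨V, fun v hv => ((hV v).1 hv).2, hnn, fun v hv => ?_, fun h0 => (hV 0).2 ⟨by simp, h0⟩⟩
  have hmin : (fun i => min (v i) N) ∈ V := by
    refine (hV _).2 ⟨fun i => min_le_right _ _, ?_⟩
    by_cases h : ∃ i, N ≤ v i
    · obtain ⟨i, hi⟩ := h
      exact hbig _ i (by simp [hi])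
    · push Not at h
      have : (fun i => min (v i) N) = v := funext fun i => min_eq_left (h i).le
      rwa [this]
  have h := (HasConicRep.of_mem hmin).add
    (hnn (expToReal d v - expToReal d fun i => min (v i) N) fun i => by
      simp [expToReal])
  rwa [add_sub_cancel, add_zero] at h

end Newton

/-- Monomial case of Theorem 3.1: for a cofinite monomial ideal `𝔞` in `k[x₁,…,x_d]`
and rational `c > 0`, the multiplicity function `n ↦ m(c+n)` agrees with a polynomial
of degree at most `d - 1`. -/
theorem multiplicity_is_polynomial (d : ℕ) (hd : 1 ≤ d) (k : Type*) [Field k]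
    (S : Set (Fin d → ℕ)) (hS : ∀ v ∈ S, ∀ w : Fin d → ℕ, v + w ∈ S)
    (hcof : (Sᶜ : Set (Fin d → ℕ)).Finite)
    (c : ℚ) (hc : 0 < c) :
    ∃ p : Polynomial ℚ, p.natDegree ≤ d - 1 ∧
      ∀ n : ℕ, (multJump d S ((c : ℝ) + n) : ℚ) = p.eval (n : ℚ) := by
  obtain ⟨V, hVS, hnn, hSV, hV0⟩ := exists_finset_generating hcof
  have hcn : ∀ n : ℕ, (0 : ℝ) < (c : ℝ) + n := fun n => by
    have : (0 : ℝ) < c := by exact_mod_cast hc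
    positivity
  have hpos : ∀ (v : Fin d → ℕ) i, 0 < (expToReal d v + 1) i := fun v i => by
    simp only [expToReal, Pi.add_apply, Pi.one_apply]
    positivity
  have hmem := fun (n : ℕ) (v : Fin d → ℕ) =>
    mem_smul_newtonPoly_diff_interior_iff hS hVS hSV hnn (hcn n) (hpos v)
  by_cases h0 : (0 : Fin d → ℕ) ∈ S
  · refine ⟨0, by simp, fun n => ?_⟩
    have hempty : {v : Fin d → ℕ | expToReal d v + 1 ∈ ((c : ℝ) + n) • newtonPoly d S \
        interior (((c : ℝ) + n) • newtonPoly d S)} = ∅ := by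
      ext v
      simp only [Set.mem_ofPred_eq, hmem, Set.mem_empty_iff_false, iff_false]
      rintro ⟨h1, h2⟩
      have h := h1.add (HasConicRep.of_mem (hV0 h0))
      have hz : expToReal d 0 = 0 := funext fun i => by simp [expToReal]
      rw [hz, add_zero] at h
      exact h2 _ (lt_add_one _) h
    rw [multJump, hempty]
    simp
  · have hs : ∀ v : V, v.1 ≠ 0 := fun v hv => h0 (hv ▸ hVS v.1 v.2)
    have hex : ∀ v : Fin d → ℕ,
        ∃ a, IsLexMaxRep (fun v : V => v.1) (expToReal d v + 1) a := fun v => by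
      obtain ⟨a, ha, -⟩ := hnn (expToReal d v + 1) fun i => (hpos v i).le
      exact exists_isLexMaxRep hs ⟨a, ha⟩
    choose opt hopt using hex
    obtain ⟨p, hp, hpc⟩ := exists_polynomial_card_sum_opt_eq hd hopt c (by exact_mod_cast hc)
    refine ⟨p, hp, fun n => ?_⟩
    rw [← hpc n, multJump]
    congr 3
    ext v
    simp only [Set.mem_ofPred_eq, hmem]
    constructor
    · rintro ⟨⟨a, ha, hac⟩, h2⟩
      refine le_antisymm (not_lt.1 fun hlt => h2 _ hlt ⟨opt v, (hopt v).1, le_rfl⟩) ?_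
      exact hac.trans ((hopt v).sum_le ha)
    · intro h
      refine ⟨⟨opt v, (hopt v).1, h.ge⟩, ?_⟩
      rintro t ht ⟨a, ha, hat⟩
      linarith [(hopt v).sum_le ha]
end

section
/- Let 𝔞 be a cofinite monomial ideal in k[x₁,…,x_d] and let c > 0 be a rational number with m(c) > 0 (i.e., c is a jumping number of 𝔞). Then the sequence m(c+n)/n^{d−1} converges as n → ∞ to a strictly positive real number ρ_c. (Corollary 5.4: the Rees coefficient of every jumping number of a cofinite monomial ideal is positive.) -/
open Set Filter Pointwise MeasureTheory

/-- The functionals, as coefficient vectors, taking values at least `1` on all exponents. -/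
def dualPoly (d : ℕ) (S : Set (Fin d → ℕ)) : Set (Fin d → ℝ) :=
  {l | ∀ v ∈ S, 1 ≤ l ⬝ᵥ expToReal d v}

/-- The exponent vectors on which the functional `l` takes the value `1`. -/
def tightSet (d : ℕ) (S : Set (Fin d → ℕ)) (l : Fin d → ℝ) : Set (Fin d → ℝ) :=
  expToReal d '' {v ∈ S | l ⬝ᵥ expToReal d v = 1}

/-- The face of the Newton polyhedron cut out by the functional `l`. -/
def faceOf (d : ℕ) (S : Set (Fin d → ℕ)) (l : Fin d → ℝ) : Set (Fin d → ℝ) :=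
  convexHull ℝ (tightSet d S l)

/-- The functionals defining the compact facets of the Newton polyhedron: the elements of
the dual polyhedron whose tight exponents span the space. -/
def facetFunctionals (d : ℕ) (S : Set (Fin d → ℕ)) : Set (Fin d → ℝ) :=
  {l ∈ dualPoly d S | Submodule.span ℝ (tightSet d S l) = ⊤}

section Polyhedron

variable {d : ℕ} {S : Set (Fin d → ℕ)}

lemma expToReal_add (v w : Fin d → ℕ) :
    expToReal d (v + w) = expToReal d v + expToReal d w := by
  ext i; simp [expToReal]

lemma expToReal_single (j : Fin d) (n : ℕ) :
    expToReal d (Pi.single j n) = Pi.single j (n : ℝ) := by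
  ext i
  by_cases h : i = j
  · subst h; simp [expToReal]
  · simp [expToReal, h]

lemma convex_dotProduct_ge (l : Fin d → ℝ) (r : ℝ) : Convex ℝ {x : Fin d → ℝ | r ≤ l ⬝ᵥ x} :=
  convex_halfSpace_ge ⟨dotProduct_add l, fun a x => dotProduct_smul a l x⟩ r

lemma one_le_dotProduct_of_mem_newtonPoly {l x : Fin d → ℝ} (hl : l ∈ dualPoly d S)
    (hx : x ∈ newtonPoly d S) : 1 ≤ l ⬝ᵥ x := by
  refine convexHull_min (t := {x | 1 ≤ l ⬝ᵥ x}) ?_ (convex_dotProduct_ge l 1) hx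
  rintro _ ⟨v, hv, rfl⟩
  exact hl v hv

lemma faceOf_subset_newtonPoly (l : Fin d → ℝ) : faceOf d S l ⊆ newtonPoly d S :=
  convexHull_mono (image_mono fun _ h => h.1)

lemma dotProduct_eq_one_of_mem_faceOf {l x : Fin d → ℝ} (hx : x ∈ faceOf d S l) :
    l ⬝ᵥ x = 1 := by
  refine convexHull_min (t := {x | l ⬝ᵥ x = 1}) ?_
    (convex_hyperplane ⟨dotProduct_add l, fun a x => dotProduct_smul a l x⟩ 1) hx
  rintro _ ⟨v, hv, rfl⟩
  exact hv.2

lemma nonneg_of_mem_newtonPoly {x : Fin d → ℝ} (hx : x ∈ newtonPoly d S) : 0 ≤ x := by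
  refine convexHull_min (t := Set.Ici 0) ?_ (convex_Ici 0) hx
  rintro _ ⟨v, -, rfl⟩ i
  simp [expToReal]

/-- A point of the Newton polyhedron on which `l` is minimal lies in the face of `l`. -/
lemma mem_faceOf {l x : Fin d → ℝ} (hl : l ∈ dualPoly d S) (hx : x ∈ newtonPoly d S)
    (hlx : l ⬝ᵥ x = 1) : x ∈ faceOf d S l := by
  have key : newtonPoly d S ⊆ {x | 1 < l ⬝ᵥ x} ∪ faceOf d S l := by
    have hge : ∀ y ∈ {x | 1 < l ⬝ᵥ x} ∪ faceOf d S l, 1 ≤ l ⬝ᵥ y := by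
      rintro y (hy | hy)
      · exact le_of_lt hy
      · exact (dotProduct_eq_one_of_mem_faceOf hy).ge
    refine convexHull_min ?_ ?_
    · rintro _ ⟨v, hv, rfl⟩
      rcases (hl v hv).lt_or_eq with h | h
      · exact Or.inl h
      · exact Or.inr (subset_convexHull ℝ _ ⟨v, ⟨hv, h.symm⟩, rfl⟩)
    · rw [convex_iff_forall_pos]
      intro y hy z hz a b ha hb hab
      have h1 := hge y hy
      have h2 := hge z hz
      have hval : l ⬝ᵥ (a • y + b • z) = a * (l ⬝ᵥ y) + b * (l ⬝ᵥ z) := by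
        simp [dotProduct_add, dotProduct_smul]
      rcases hy with hy | hy
      · left
        have hy : 1 < l ⬝ᵥ y := hy
        change 1 < l ⬝ᵥ (a • y + b • z)
        rw [hval]; nlinarith
      · rcases hz with hz | hz
        · left
          have hz : 1 < l ⬝ᵥ z := hz
          change 1 < l ⬝ᵥ (a • y + b • z)
          rw [hval]; nlinarith
        · exact Or.inr (convex_convexHull ℝ _ hy hz ha.le hb.le hab)
  rcases key hx with h | h
  · exact absurd hlx (ne_of_gt h)
  · exact h

/-- Pure powers of every variable occur among the exponents. -/
lemma exists_single_mem (hcof : (Sᶜ : Set (Fin d → ℕ)).Finite) :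
    ∃ N : ℕ, ∀ j, Pi.single j N ∈ S := by
  obtain ⟨B, hB⟩ := hcof.bddAbove
  refine ⟨(∑ i, B i) + 1, fun j => ?_⟩
  by_contra h
  have h1 := hB (show Pi.single j ((∑ i, B i) + 1) ∈ Sᶜ from h) j
  have h2 := Finset.single_le_sum (f := B) (fun i _ => Nat.zero_le _) (Finset.mem_univ j)
  rw [Pi.single_eq_same] at h1
  exact absurd (h1.trans h2) (by simp)

lemma one_le_mul_of_mem_dualPoly {N : ℕ} (hN : ∀ j, Pi.single j N ∈ S) {l : Fin d → ℝ}
    (hl : l ∈ dualPoly d S) (j : Fin d) : 1 ≤ l j * N := by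
  have := hl _ (hN j)
  rwa [expToReal_single, dotProduct_single] at this

lemma pos_of_mem_dualPoly {N : ℕ} (hN : ∀ j, Pi.single j N ∈ S) {l : Fin d → ℝ}
    (hl : l ∈ dualPoly d S) (j : Fin d) : 0 < l j := by
  have := one_le_mul_of_mem_dualPoly hN hl j
  by_contra h
  have : l j * N ≤ 0 := mul_nonpos_of_nonpos_of_nonneg (not_lt.1 h) (Nat.cast_nonneg N)
  linarith

lemma le_of_dotProduct_le {N : ℕ} (hN : ∀ j, Pi.single j N ∈ S) {l : Fin d → ℝ}
    (hl : l ∈ dualPoly d S) {x : Fin d → ℝ} (hx : 0 ≤ x) {r : ℝ} (h : l ⬝ᵥ x ≤ r)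
    (j : Fin d) : x j ≤ N * r := by
  have h1 : l j * x j ≤ l ⬝ᵥ x :=
    Finset.single_le_sum (f := fun i => l i * x i)
      (fun i _ => mul_nonneg (pos_of_mem_dualPoly hN hl i).le (hx i)) (Finset.mem_univ j)
  have h2 := one_le_mul_of_mem_dualPoly hN hl j
  calc x j ≤ (l j * N) * x j := le_mul_of_one_le_left (hx j) h2
    _ = N * (l j * x j) := by ring
    _ ≤ N * r := by gcongr; linarith

lemma finite_setOf_dotProduct_le {N : ℕ} (hN : ∀ j, Pi.single j N ∈ S) {l : Fin d → ℝ}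
    (hl : l ∈ dualPoly d S) (r : ℝ) :
    {v : Fin d → ℕ | l ⬝ᵥ expToReal d v ≤ r}.Finite := by
  refine (Set.finite_Iic (fun _ => ⌊(N : ℝ) * r⌋₊ : Fin d → ℕ)).subset fun v hv j => ?_
  exact Nat.le_floor (le_of_dotProduct_le hN hl (fun i => Nat.cast_nonneg (v i)) hv j)

lemma finite_tightSet {N : ℕ} (hN : ∀ j, Pi.single j N ∈ S) {l : Fin d → ℝ}
    (hl : l ∈ dualPoly d S) : (tightSet d S l).Finite :=
  ((finite_setOf_dotProduct_le hN hl 1).subset fun _ hv => hv.2.le).image _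

lemma eq_of_eqOn_span_eq_top {l l' : Fin d → ℝ} {T : Set (Fin d → ℝ)}
    (hT : Submodule.span ℝ T = ⊤) (h : ∀ x ∈ T, l ⬝ᵥ x = l' ⬝ᵥ x) : l = l' := by
  have h2 : dotProductBilin ℝ ℝ l = dotProductBilin ℝ ℝ l' :=
    LinearMap.ext_on hT fun x hx => h x hx
  exact dotProduct_eq _ _ fun x => LinearMap.congr_fun h2 x

lemma finite_facetFunctionals {N : ℕ} (hN : ∀ j, Pi.single j N ∈ S) :
    (facetFunctionals d S).Finite := by
  have hfin : (𝒫 (expToReal d '' Set.Iic (fun _ => N))).Finite :=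
    ((Set.finite_Iic _).image _).finite_subsets
  refine Set.Finite.of_finite_image (f := tightSet d S) (hfin.subset ?_) ?_
  · rintro _ ⟨l, hl, rfl⟩
    refine image_mono fun v hv j => ?_
    have := le_of_dotProduct_le hN hl.1 (fun i => Nat.cast_nonneg (v i)) hv.2.le j
    rw [mul_one] at this
    exact_mod_cast this
  · intro l hl l' hl' h
    refine eq_of_eqOn_span_eq_top hl.2 ?_
    intro x hx
    have hx' : x ∈ tightSet d S l' := h ▸ hx
    obtain ⟨v, hv, rfl⟩ := hx
    obtain ⟨w, hw, hwv⟩ := hx'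
    rw [hv.2, ← hwv, hw.2]

/-- A small perturbation of an element of the dual polyhedron by a functional vanishing on
its tight exponents stays in the dual polyhedron. -/
lemma exists_perturbation_mem_dualPoly {N : ℕ} (hN : ∀ j, Pi.single j N ∈ S) {l h : Fin d → ℝ}
    (hl : l ∈ dualPoly d S) (hh : ∀ x ∈ tightSet d S l, h ⬝ᵥ x = 0) :
    ∃ ε : ℝ, 0 < ε ∧ ∀ t : ℝ, |t| ≤ ε → l + t • h ∈ dualPoly d S := by
  have hsmall : ∀ᶠ ε : ℝ in nhdsWithin 0 (Set.Ioi 0), (∀ j, ε * |h j| ≤ l j / 2) ∧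
      ∀ v ∈ {v : Fin d → ℕ | l ⬝ᵥ expToReal d v ≤ 2}, 1 < l ⬝ᵥ expToReal d v →
        ε * |h ⬝ᵥ expToReal d v| ≤ l ⬝ᵥ expToReal d v - 1 := by
    have hlin : ∀ A B : ℝ, 0 < B → ∀ᶠ ε : ℝ in nhdsWithin 0 (Set.Ioi 0), ε * A ≤ B := by
      intro A B hB
      have : Tendsto (fun ε : ℝ => ε * A) (nhdsWithin 0 (Set.Ioi 0)) (nhds (0 * A)) :=
        ((continuous_id.mul continuous_const).tendsto 0).mono_left nhdsWithin_le_nhds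
      rw [zero_mul] at this
      exact (this.eventually (gt_mem_nhds hB)).mono fun _ h => le_of_lt h
    refine Filter.Eventually.and ?_ ?_
    · exact Filter.eventually_all.2 fun j => hlin _ _ (half_pos (pos_of_mem_dualPoly hN hl j))
    · refine (Filter.eventually_all_finite (finite_setOf_dotProduct_le hN hl 2)).2 fun v _ => ?_
      by_cases hv : 1 < l ⬝ᵥ expToReal d v
      · exact (hlin _ _ (sub_pos.2 hv)).mono fun _ h _ => h
      · exact Filter.Eventually.of_forall fun _ h => absurd h hv
  obtain ⟨ε, ⟨h1, h2⟩, hε⟩ := (hsmall.and self_mem_nhdsWithin).exists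
  refine ⟨ε, hε, fun t ht v hv => ?_⟩
  rw [add_dotProduct, smul_dotProduct, smul_eq_mul]
  have habs : ∀ A : ℝ, -(ε * |A|) ≤ t * A := fun A => by
    have := neg_abs_le (t * A)
    rw [abs_mul] at this
    have := mul_le_mul_of_nonneg_right ht (abs_nonneg A)
    linarith
  rcases (hl v hv).lt_or_eq with hlt | heq
  · by_cases hle : l ⬝ᵥ expToReal d v ≤ 2
    · have := h2 v hle hlt
      have := habs (h ⬝ᵥ expToReal d v)
      linarith
    · have hsum : (2⁻¹ : ℝ) * (l ⬝ᵥ expToReal d v) ≤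
          l ⬝ᵥ expToReal d v + t * (h ⬝ᵥ expToReal d v) := by
        simp only [dotProduct, Finset.mul_sum, ← Finset.sum_add_distrib]
        refine Finset.sum_le_sum fun i _ => ?_
        have hv0 : (0 : ℝ) ≤ expToReal d v i := Nat.cast_nonneg _
        have := habs (h i)
        have := h1 i
        have h3 : 2⁻¹ * l i ≤ l i + t * h i := by linarith
        nlinarith [mul_le_mul_of_nonneg_right h3 hv0]
      linarith [not_le.1 hle]
  · rw [hh _ ⟨v, ⟨hv, heq.symm⟩, rfl⟩]
    linarith

lemma exists_ne_zero_orthogonal_of_span_ne_top {T : Set (Fin d → ℝ)} (hT : Submodule.span ℝ T ≠ ⊤) :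
    ∃ h : Fin d → ℝ, h ≠ 0 ∧ ∀ x ∈ T, h ⬝ᵥ x = 0 := by
  obtain ⟨f, hf, hfT⟩ := Submodule.exists_le_ker_of_lt_top _ (lt_top_iff_ne_top.2 hT)
  have hrep : ∀ x, (fun i => f (Pi.single i 1)) ⬝ᵥ x = f x := fun x => by
    conv_rhs => rw [pi_eq_sum_univ' x]
    simp [dotProduct, mul_comm]
  refine ⟨fun i => f (Pi.single i 1), fun h0 => hf ?_, fun x hx => ?_⟩
  · ext1
    ext
    simpa using congrFun h0 _
  · rw [hrep]
    exact hfT (Submodule.subset_span hx)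

lemma interior_newtonPoly_nonempty (hS : ∀ v ∈ S, ∀ w : Fin d → ℕ, v + w ∈ S)
    (hne : S.Nonempty) : (interior (newtonPoly d S)).Nonempty := by
  obtain ⟨v, hv⟩ := hne
  rw [newtonPoly, interior_convexHull_nonempty_iff_affineSpan_eq_top]
  have hspan : (affineSpan ℝ (expToReal d '' S) : Set (Fin d → ℝ)).Nonempty :=
    (affineSpan_nonempty ℝ).2 ⟨_, v, hv, rfl⟩
  rw [← AffineSubspace.direction_eq_top_iff_of_nonempty hspan, direction_affineSpan, eq_top_iff,
    ← (Pi.basisFun ℝ (Fin d)).span_eq, Submodule.span_le]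
  rintro _ ⟨j, rfl⟩
  have : (Pi.basisFun ℝ (Fin d)) j = expToReal d (v + Pi.single j 1) -ᵥ expToReal d v := by
    simp [expToReal_add, expToReal_single]
  rw [this]
  exact vsub_mem_vectorSpan ℝ ⟨_, hS v hv _, rfl⟩ ⟨v, hv, rfl⟩

/-- A boundary point of the Newton polyhedron in the open orthant is supported by an element of
the dual polyhedron. -/
lemma exists_mem_dualPoly_of_notMem_interior
    (hS : ∀ v ∈ S, ∀ w : Fin d → ℕ, v + w ∈ S)
    (hne : S.Nonempty) {x : Fin d → ℝ} (hx0 : ∀ i, 0 < x i)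
    (hxint : x ∉ interior (newtonPoly d S)) : ∃ l ∈ dualPoly d S, l ⬝ᵥ x = 1 := by
  have hconv : Convex ℝ (newtonPoly d S) := convex_convexHull ℝ _
  obtain ⟨f, hf⟩ := geometric_hahn_banach_open_point hconv.interior isOpen_interior hxint
  have hintne := interior_newtonPoly_nonempty hS hne
  have hfP : ∀ y ∈ newtonPoly d S, f y ≤ f x := by
    intro y hy
    have hy' : y ∈ closure (interior (newtonPoly d S)) := by
      rw [hconv.closure_interior_eq_closure_of_nonempty_interior hintne]
      exact subset_closure hy
    exact closure_minimal (fun z hz => (hf z hz).le)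
      (isClosed_le f.continuous continuous_const) hy'
  set g : Fin d → ℝ := fun i => -f (Pi.single i 1) with hg
  have hrep : ∀ y, g ⬝ᵥ y = -f y := fun y => by
    conv_rhs => rw [pi_eq_sum_univ' y]
    simp [dotProduct, hg, mul_comm]
  obtain ⟨v, hv⟩ := hne
  have hg0 : ∀ i, 0 ≤ g i := by
    intro i
    by_contra hneg
    have hneg : 0 < f (Pi.single i 1) := by simpa [hg] using hneg
    obtain ⟨n, hn⟩ := exists_nat_gt ((f x - f (expToReal d v)) / f (Pi.single i 1))
    have h1 := hfP _ (subset_convexHull ℝ _ ⟨v + Pi.single i n, hS v hv _, rfl⟩)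
    have h2 : (Pi.single i (n : ℝ) : Fin d → ℝ) = (n : ℝ) • Pi.single i 1 := by
      rw [← Pi.single_smul]; simp
    rw [expToReal_add, expToReal_single, h2, map_add, map_smul, smul_eq_mul] at h1
    rw [div_lt_iff₀ hneg] at hn
    linarith
  have hgx : 0 < g ⬝ᵥ x := by
    obtain ⟨y, hy⟩ := hintne
    have hgne : ∃ i, g i ≠ 0 := by
      by_contra! hall
      have h0 : ∀ z, f z = 0 := fun z => by
        have := hrep z
        rw [show g = 0 from funext hall, zero_dotProduct] at this
        linarith
      have := hf y hy
      rw [h0, h0] at this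
      exact lt_irrefl _ this
    obtain ⟨i, hi⟩ := hgne
    exact Finset.sum_pos' (fun j _ => mul_nonneg (hg0 j) (hx0 j).le)
      ⟨i, Finset.mem_univ i, mul_pos (lt_of_le_of_ne (hg0 i) hi.symm) (hx0 i)⟩
  refine ⟨(g ⬝ᵥ x)⁻¹ • g, fun w hw => ?_, ?_⟩
  · rw [smul_dotProduct, smul_eq_mul, ← div_eq_inv_mul, one_le_div hgx, hrep, hrep]
    exact neg_le_neg (hfP _ (subset_convexHull ℝ _ ⟨w, hw, rfl⟩))
  · rw [smul_dotProduct, smul_eq_mul, inv_mul_cancel₀ hgx.ne']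

/-- A boundary point of the Newton polyhedron in the open orthant lies on a compact facet. -/
lemma exists_facetFunctional (hd : 1 ≤ d) (hS : ∀ v ∈ S, ∀ w : Fin d → ℕ, v + w ∈ S)
    {N : ℕ} (hN : ∀ j, Pi.single j N ∈ S) {x : Fin d → ℝ} (hx0 : ∀ i, 0 < x i)
    (hx : x ∈ newtonPoly d S) (hxint : x ∉ interior (newtonPoly d S)) :
    ∃ l ∈ facetFunctionals d S, x ∈ faceOf d S l := by
  have hne : S.Nonempty := ⟨_, hN ⟨0, hd⟩⟩
  set A : Set (Fin d → ℝ) := {l | l ∈ dualPoly d S ∧ l ⬝ᵥ x = 1} with hA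
  have hAne : A.Nonempty := exists_mem_dualPoly_of_notMem_interior hS hne hx0 hxint
  have hcont : ∀ y : Fin d → ℝ, Continuous fun l : Fin d → ℝ => l ⬝ᵥ y := fun y =>
    continuous_id.dotProduct continuous_const
  have hAclosed : IsClosed A := by
    have h1 : A = (⋂ v ∈ S, {l | 1 ≤ l ⬝ᵥ expToReal d v}) ∩ {l | l ⬝ᵥ x = 1} := by
      ext l; simp [hA, dualPoly]
    rw [h1]
    exact (isClosed_biInter fun v _ => isClosed_le continuous_const (hcont _)).inter
      (isClosed_eq (hcont x) continuous_const)
  have hAcomp : IsCompact A := by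
    refine (isCompact_Icc (a := (0 : Fin d → ℝ)) (b := fun i => (x i)⁻¹)).of_isClosed_subset
      hAclosed fun l hl => ⟨fun i => (pos_of_mem_dualPoly hN hl.1 i).le, fun i => ?_⟩
    have h1 : l i * x i ≤ l ⬝ᵥ x :=
      Finset.single_le_sum (f := fun i => l i * x i)
        (fun i _ => mul_nonneg (pos_of_mem_dualPoly hN hl.1 i).le (hx0 i).le) (Finset.mem_univ i)
    rw [hl.2] at h1
    change l i ≤ (x i)⁻¹
    rwa [← one_div, le_div_iff₀ (hx0 i)]
  obtain ⟨l, hlA, hlext⟩ := hAcomp.extremePoints_nonempty hAne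
  have hface := mem_faceOf hlA.1 hx hlA.2
  refine ⟨l, ⟨hlA.1, ?_⟩, hface⟩
  by_contra hspan
  obtain ⟨h, hh0, hh⟩ := exists_ne_zero_orthogonal_of_span_ne_top hspan
  obtain ⟨ε, hε, hmem⟩ := exists_perturbation_mem_dualPoly hN hlA.1 hh
  have hhx : h ⬝ᵥ x = 0 :=
    convexHull_min (t := {x | h ⬝ᵥ x = 0}) hh
      (convex_hyperplane ⟨dotProduct_add h, fun a x => dotProduct_smul a h x⟩ 0) hface
  have hmemA : ∀ t : ℝ, |t| ≤ ε → l + t • h ∈ A := fun t ht =>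
    ⟨hmem t ht, by rw [add_dotProduct, smul_dotProduct, hhx, hlA.2]; simp⟩
  have hseg : l ∈ openSegment ℝ (l + ε • h) (l + (-ε) • h) :=
    ⟨2⁻¹, 2⁻¹, by norm_num, by norm_num, by norm_num, by module⟩
  have heq := hlext (hmemA ε (abs_of_pos hε).le) (hmemA (-ε) (by rw [abs_neg, abs_of_pos hε])) hseg
  have : ε • h = 0 := by simpa using heq
  exact hh0 ((smul_eq_zero.1 this).resolve_left hε.ne')

end Polyhedron

section LatticeCount

/-- The number of lattice points in dilates of a convex body grows like a positive multiple of
the expected power. -/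
lemma exists_tendsto_card_inter_lattice {E : Type*} [NormedAddCommGroup E] [NormedSpace ℝ E]
    [FiniteDimensional ℝ E] [MeasurableSpace E] [BorelSpace E] (L : Submodule ℤ E)
    [DiscreteTopology L] [IsZLattice ℝ L] {s : Set E} (hconv : Convex ℝ s) (hcomp : IsCompact s)
    (hint : (interior s).Nonempty) :
    ∃ ρ : ℝ, 0 < ρ ∧ Tendsto (fun n : ℕ => (Nat.card (s ∩ (n : ℝ)⁻¹ • (L : Set E) : Set E) : ℝ) /
      (n : ℝ) ^ Module.finrank ℝ E) atTop (nhds ρ) := by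
  let b := Module.Free.chooseBasis ℤ L
  let e := (b.ofZLatticeBasis ℝ L).equivFunL
  have himage : ((b.ofZLatticeBasis ℝ L).equivFun '' s) = e '' s := rfl
  have hconv' : Convex ℝ (e '' s) := hconv.linear_image e.toLinearEquiv.toLinearMap
  have h := ZLattice.covolume.tendsto_card_div_pow'' b hcomp.isBounded hcomp.measurableSet
    (by rw [himage]; exact hconv'.addHaar_frontier _)
  rw [← Module.finrank_eq_card_chooseBasisIndex, ZLattice.rank ℝ L, himage] at h
  refine ⟨_, ?_, h⟩
  have hpos : 0 < volume (e '' s) := by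
    refine Measure.measure_pos_of_nonempty_interior _ ?_
    have := e.toHomeomorph.image_interior s
    change e '' interior s = interior (e '' s) at this
    rw [← this]
    exact hint.image _
  exact ENNReal.toReal_pos hpos.ne' (hcomp.image e.continuous).measure_lt_top.ne

end LatticeCount

/-- The integral points of the `t`-th dilate of the face of `l`. -/
def facePoints (d : ℕ) (S : Set (Fin d → ℕ)) (l : Fin d → ℝ) (t : ℝ) : Set (Fin d → ℤ) :=
  {u | (fun i => (u i : ℝ)) ∈ t • faceOf d S l}

section FaceCount

variable {d : ℕ} {S : Set (Fin d → ℕ)}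

lemma dotProduct_eq_of_mem_smul_faceOf {l x : Fin d → ℝ} {t : ℝ} (hx : x ∈ t • faceOf d S l) :
    l ⬝ᵥ x = t := by
  obtain ⟨y, hy, rfl⟩ := hx
  change l ⬝ᵥ (t • y) = t
  rw [dotProduct_smul, dotProduct_eq_one_of_mem_faceOf hy, smul_eq_mul, mul_one]

lemma mem_span_basisFun_iff {x : Fin d → ℝ} :
    x ∈ Submodule.span ℤ (Set.range (Pi.basisFun ℝ (Fin d))) ↔
      ∃ u : Fin d → ℤ, (fun i => (u i : ℝ)) = x := by
  rw [Module.Basis.mem_span_iff_repr_mem]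
  simp only [Pi.basisFun_repr, Set.mem_range]
  constructor
  · intro h
    choose u hu using h
    exact ⟨u, funext fun i => by simpa using hu i⟩
  · rintro ⟨u, rfl⟩ i
    exact ⟨u i, by simp⟩

/-- The number of lattice points in dilates of a compact facet has the expected growth. -/
lemma exists_tendsto_ncard_facePoints (hd : 1 ≤ d) {N : ℕ} (hN : ∀ j, Pi.single j N ∈ S)
    {l : Fin d → ℝ} (hl : l ∈ facetFunctionals d S) :
    ∃ ρ : ℝ, 0 < ρ ∧ Tendsto (fun n : ℕ => ((facePoints d S l n).ncard : ℝ) / (n : ℝ) ^ (d - 1))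
      atTop (nhds ρ) := by
  have : Nonempty (Fin d) := ⟨⟨0, hd⟩⟩
  obtain ⟨y, w, ⟨hwS, hw⟩, rfl⟩ : (tightSet d S l).Nonempty := by
    by_contra hemp
    have := hl.2
    rw [Set.not_nonempty_iff_eq_empty.1 hemp, Submodule.span_empty] at this
    exact bot_ne_top this
  set φ : (Fin d → ℝ) →ₗ[ℝ] ℝ := dotProductBilin ℝ ℝ l with hφ
  have hφv : ∀ x, φ x = l ⬝ᵥ x := fun x => rfl
  set W : Fin d → ℝ := expToReal d w with hW
  have hφW : φ W = 1 := hw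
  set E := LinearMap.ker φ with hE
  let ψ : (Fin d → ℝ) →ₗ[ℝ] E :=
    LinearMap.codRestrict E (LinearMap.id - φ.smulRight W) fun x => by
      simp [hE, hφW]
  have hψ : ∀ x, (ψ x : Fin d → ℝ) = x - φ x • W := fun x => rfl
  have hψE : ∀ x : E, ψ x = x := fun x => by
    ext1
    rw [hψ, LinearMap.mem_ker.1 x.2, zero_smul, sub_zero]
  have hrank : Module.finrank ℝ E = d - 1 := by
    have := Module.Dual.finrank_ker_add_one_of_ne_zero (f := φ) (by
      intro h0; rw [h0] at hφW; simp at hφW)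
    rw [Module.finrank_fin_fun] at this
    change Module.finrank ℝ E + 1 = d at this
    omega
  let L : Submodule ℤ E := (Submodule.span ℤ (Set.range (Pi.basisFun ℝ (Fin d)))).comap
    (E.subtype.restrictScalars ℤ)
  have hL : ∀ x : E, x ∈ L ↔ ∃ u : Fin d → ℤ, (fun i => (u i : ℝ)) = (x : Fin d → ℝ) := fun x =>
    mem_span_basisFun_iff
  have : DiscreteTopology
      (Submodule.span ℤ (Set.range (Pi.basisFun ℝ (Fin d))) : Set (Fin d → ℝ)) :=
    inferInstanceAs
      (DiscreteTopology (Submodule.span ℤ (Set.range (Pi.basisFun ℝ (Fin d)))))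
  have hdisc : DiscreteTopology L :=
    DiscreteTopology.preimage_of_continuous_injective
      (Submodule.span ℤ (Set.range (Pi.basisFun ℝ (Fin d))) : Set (Fin d → ℝ))
      continuous_subtype_val Subtype.val_injective
  have hspan : Submodule.span ℝ (ψ '' tightSet d S l) = ⊤ := by
    rw [← Submodule.map_span, hl.2, Submodule.map_top, LinearMap.range_eq_top]
    exact fun x => ⟨x, hψE x⟩
  have hφtight : ∀ x ∈ tightSet d S l, φ x = 1 := by
    rintro _ ⟨v, hv, rfl⟩; exact hv.2
  have hlat : IsZLattice ℝ L := ⟨by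
    rw [eq_top_iff, ← hspan]
    refine Submodule.span_mono ?_
    rintro _ ⟨x, hx, rfl⟩
    have hφx := hφtight x hx
    obtain ⟨v, hv, rfl⟩ := hx
    refine (hL _).2 ⟨fun i => (v i : ℤ) - w i, ?_⟩
    rw [hψ, hφx, one_smul]
    ext i
    simp [hW, expToReal]⟩
  set s : Set E := {x | (x : Fin d → ℝ) + W ∈ faceOf d S l} with hs
  have hsconv : Convex ℝ s := by
    have h1 := ((convex_convexHull ℝ (tightSet d S l)).translate_preimage_left W).linear_preimage
      E.subtype
    exact h1
  have hscomp : IsCompact s := by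
    have hemb : Topology.IsClosedEmbedding fun x : E => (x : Fin d → ℝ) + W :=
      (Homeomorph.addRight W).isClosedEmbedding.comp
        (Submodule.closed_of_finiteDimensional E).isClosedEmbedding_subtypeVal
    exact hemb.isCompact_preimage ((finite_tightSet hN hl.1).isCompact_convexHull ℝ)
  have hψs : ∀ x ∈ tightSet d S l, ψ x ∈ s := by
    intro x hx
    change (ψ x : Fin d → ℝ) + W ∈ faceOf d S l
    rw [hψ, hφtight x hx, one_smul, sub_add_cancel]
    exact subset_convexHull ℝ _ hx
  have hWtight : W ∈ tightSet d S l := ⟨w, ⟨hwS, hw⟩, rfl⟩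
  have hψW : ψ W = 0 := by
    ext1; rw [hψ, hφW, one_smul, sub_self]; rfl
  have hsint : (interior s).Nonempty := by
    rw [hsconv.interior_nonempty_iff_affineSpan_eq_top,
      ← AffineSubspace.direction_eq_top_iff_of_nonempty
      ((affineSpan_nonempty ℝ).2 ⟨_, hψs W hWtight⟩), direction_affineSpan, eq_top_iff,
      ← hspan, Submodule.span_le]
    rintro _ ⟨x, hx, rfl⟩
    have := vsub_mem_vectorSpan ℝ (hψs x hx) (hψs W hWtight)
    rwa [hψW, vsub_eq_sub, sub_zero] at this
  obtain ⟨ρ, hρ, hlim⟩ := exists_tendsto_card_inter_lattice L hsconv hscomp hsint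
  refine ⟨ρ, hρ, hlim.congr' ?_⟩
  filter_upwards [eventually_gt_atTop 0] with n hn
  have hn' : (n : ℝ) ≠ 0 := by exact_mod_cast hn.ne'
  rw [hrank, Nat.card_coe_set_eq]
  congr 2
  have himg : s ∩ (n : ℝ)⁻¹ • (L : Set E) =
      (fun u : Fin d → ℤ => (n : ℝ)⁻¹ • ψ (fun i => (u i : ℝ))) '' facePoints d S l n := by
    ext x
    constructor
    · rintro ⟨hxs, y, hy, rfl⟩
      obtain ⟨u, hu⟩ := (hL y).1 hy
      have hcast : (fun i => ((u i + n * w i : ℤ) : ℝ)) = (y : Fin d → ℝ) + (n : ℝ) • W := by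
        rw [← hu]; ext i; simp [hW, expToReal]
      refine ⟨fun i => u i + n * w i, ?_, ?_⟩
      · change (fun i => ((u i + n * w i : ℤ) : ℝ)) ∈ (n : ℝ) • faceOf d S l
        rw [hcast, Set.mem_smul_set_iff_inv_smul_mem₀ hn', smul_add, inv_smul_smul₀ hn']
        exact hxs
      · simp only
        rw [hcast, map_add, map_smul, hψW, smul_zero, add_zero, hψE]
    · rintro ⟨u, hu, rfl⟩
      have hφu : φ (fun i => (u i : ℝ)) = n := dotProduct_eq_of_mem_smul_faceOf hu
      have hval : (ψ (fun i => (u i : ℝ)) : Fin d → ℝ) = (fun i => (u i : ℝ)) - (n : ℝ) • W := by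
        rw [hψ, hφu]
      refine ⟨?_, Set.smul_mem_smul_set ((hL _).2 ⟨fun i => u i - n * w i, ?_⟩)⟩
      · change (n : ℝ)⁻¹ • (ψ (fun i => (u i : ℝ)) : Fin d → ℝ) + W ∈ faceOf d S l
        rw [hval, smul_sub, inv_smul_smul₀ hn', sub_add_cancel]
        exact (Set.mem_smul_set_iff_inv_smul_mem₀ hn' _ _).1 hu
      · rw [hval]; ext i; simp [hW, expToReal]
  rw [himg]
  refine Set.InjOn.ncard_image ?_
  intro u hu u' hu' h
  have h1 := congrArg (Subtype.val) (smul_right_injective E (inv_ne_zero hn') h)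
  have hφu : φ (fun i => (u i : ℝ)) = n := dotProduct_eq_of_mem_smul_faceOf hu
  have hφu' : φ (fun i => (u' i : ℝ)) = n := dotProduct_eq_of_mem_smul_faceOf hu'
  rw [hψ, hψ, hφu, hφu', sub_left_inj] at h1
  ext i
  exact_mod_cast congrFun h1 i

end FaceCount

section Shift

variable {d : ℕ} {S : Set (Fin d → ℕ)}

lemma exists_basis_mem_tightSet {l : Fin d → ℝ} (hl : l ∈ facetFunctionals d S) :
    ∃ b : Module.Basis (Fin d) ℝ (Fin d → ℝ), ∀ i, b i ∈ tightSet d S l := by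
  let b₀ := Module.Basis.ofSpan hl.2.ge
  refine ⟨b₀.reindex (b₀.indexEquiv (Pi.basisFun ℝ (Fin d))), fun i => ?_⟩
  rw [Module.Basis.reindex_apply]
  exact Module.Basis.ofSpan_subset hl.2.ge ⟨_, rfl⟩

lemma sum_smul_mem_smul_faceOf {l : Fin d → ℝ} {b : Fin d → Fin d → ℝ}
    (hb : ∀ i, b i ∈ tightSet d S l) {β : Fin d → ℝ} (hβ : ∀ i, 0 ≤ β i)
    (hsum : 0 < ∑ i, β i) : ∑ i, β i • b i ∈ (∑ i, β i) • faceOf d S l := by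
  rw [Set.mem_smul_set_iff_inv_smul_mem₀ hsum.ne', Finset.smul_sum]
  simp only [smul_smul]
  refine (convex_convexHull ℝ (tightSet d S l)).sum_mem (fun i _ => ?_) ?_
    fun i _ => subset_convexHull ℝ _ (hb i)
  · exact mul_nonneg (inv_nonneg.2 hsum.le) (hβ i)
  · rw [← Finset.mul_sum, inv_mul_cancel₀ hsum.ne']

/-- Every integral vector is moved into the interior of the cone over a compact facet by adding
large multiples of a fixed number of lattice points of the facet. -/
lemma exists_shift_mem_facePoints (hd : 1 ≤ d) {l : Fin d → ℝ} (hl : l ∈ facetFunctionals d S)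
    (u : Fin d → ℤ) : ∃ k₀ : ℕ, ∀ k : ℕ, k₀ ≤ k → ∃ p : Fin d → ℤ,
      0 ≤ l ⬝ᵥ (fun i => (u i : ℝ)) + (k * d : ℕ) ∧
      p ∈ facePoints d S l (l ⬝ᵥ (fun i => (u i : ℝ)) + (k * d : ℕ)) ∧ (∀ i, 0 < p i) ∧
      ∀ l' ∈ dualPoly d S, l' ≠ l → l ⬝ᵥ (fun i => (p i : ℝ)) < l' ⬝ᵥ (fun i => (p i : ℝ)) := by
  have : Nonempty (Fin d) := ⟨⟨0, hd⟩⟩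
  obtain ⟨b, hb⟩ := exists_basis_mem_tightSet hl
  choose w hw hwb using hb
  set U : Fin d → ℝ := fun i => (u i : ℝ) with hU
  refine ⟨⌈∑ i, |b.repr U i|⌉₊ + 1, fun k hk => ?_⟩
  set β : Fin d → ℝ := fun i => b.repr U i + k with hβ
  have hβpos : ∀ i, 0 < β i := by
    intro i
    have h1 : |b.repr U i| ≤ ∑ i, |b.repr U i| :=
      Finset.single_le_sum (f := fun i => |b.repr U i|) (fun i _ => abs_nonneg _)
        (Finset.mem_univ i)
    have h2 := Nat.le_ceil (∑ i, |b.repr U i|)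
    have h3 : ((⌈∑ i, |b.repr U i|⌉₊ + 1 : ℕ) : ℝ) ≤ k := by exact_mod_cast hk
    push_cast at h3
    have h4 := neg_abs_le (b.repr U i)
    simp only [hβ]
    linarith
  have hlb : ∀ i, l ⬝ᵥ b i = 1 := fun i => by rw [← hwb i]; exact (hw i).2
  have hdot : ∀ l' : Fin d → ℝ, l' ⬝ᵥ ∑ i, β i • b i = ∑ i, β i * (l' ⬝ᵥ b i) := fun l' => by
    rw [dotProduct_sum]
    exact Finset.sum_congr rfl fun i _ => by rw [dotProduct_smul, smul_eq_mul]
  have hlu : l ⬝ᵥ U = ∑ i, b.repr U i := by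
    conv_lhs => rw [← b.sum_repr U, dotProduct_sum]
    exact Finset.sum_congr rfl fun i _ => by rw [dotProduct_smul, smul_eq_mul, hlb, mul_one]
  have hsum : l ⬝ᵥ U + (k * d : ℕ) = ∑ i, β i := by
    rw [hlu]
    simp [hβ, Finset.sum_add_distrib, mul_comm]
  have hsumpos : 0 < ∑ i, β i := Finset.sum_pos (fun i _ => hβpos i) Finset.univ_nonempty
  set p : Fin d → ℤ := fun j => u j + k * ∑ i, (w i j : ℤ) with hp
  have hcast : (fun j => (p j : ℝ)) = ∑ i, β i • b i := by
    simp only [hβ, add_smul, Finset.sum_add_distrib]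
    rw [b.sum_repr U, ← Finset.smul_sum]
    ext j
    simp [hp, hU, ← hwb, expToReal]
  refine ⟨p, ?_, ?_, fun j => ?_, fun l' hl' hne => ?_⟩
  · rw [hsum]; exact hsumpos.le
  · rw [hsum]
    change (fun j => (p j : ℝ)) ∈ (∑ i, β i) • faceOf d S l
    rw [hcast]
    exact sum_smul_mem_smul_faceOf (fun i => ⟨w i, hw i, hwb i⟩) (fun i => (hβpos i).le) hsumpos
  · have hb0 : ∀ i, 0 ≤ b i j := fun i => by rw [← hwb i]; exact Nat.cast_nonneg _
    obtain ⟨i, hi⟩ : ∃ i, b i j ≠ 0 := by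
      by_contra! hall
      have h0 : (LinearMap.proj j : (Fin d → ℝ) →ₗ[ℝ] ℝ) = 0 :=
        b.ext fun i => by simpa using hall i
      simpa using LinearMap.congr_fun h0 (Pi.single j 1)
    have h1 := congrFun hcast j
    simp only [Finset.sum_apply, Pi.smul_apply, smul_eq_mul] at h1
    have h2 : 0 < ∑ i, β i * b i j :=
      Finset.sum_pos' (fun i _ => mul_nonneg (hβpos i).le (hb0 i))
        ⟨i, Finset.mem_univ i, mul_pos (hβpos i) (lt_of_le_of_ne (hb0 i) hi.symm)⟩
    rw [← h1] at h2
    exact_mod_cast h2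
  · rw [hcast, hdot, hdot]
    have hge : ∀ i, 1 ≤ l' ⬝ᵥ b i := fun i => by rw [← hwb i]; exact hl' _ (hw i).1
    obtain ⟨i, hi⟩ : ∃ i, l' ⬝ᵥ b i ≠ l ⬝ᵥ b i := by
      by_contra! hall
      refine hne (eq_of_eqOn_span_eq_top b.span_eq ?_)
      rintro _ ⟨i, rfl⟩
      exact hall i
    refine Finset.sum_lt_sum (fun j _ => ?_) ⟨i, Finset.mem_univ i, ?_⟩
    · rw [hlb]
      exact mul_le_mul_of_nonneg_left (hge j) (hβpos j).le
    · rw [hlb] at hi ⊢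
      exact mul_lt_mul_of_pos_left (lt_of_le_of_ne (hge i) hi.symm) (hβpos i)

lemma nonneg_of_mem_facePoints {l : Fin d → ℝ} {t : ℝ} (ht : 0 ≤ t) {u : Fin d → ℤ}
    (hu : u ∈ facePoints d S l t) (i : Fin d) : 0 ≤ u i := by
  obtain ⟨y, hy, hyu⟩ := hu
  have h1 : t * y i = u i := congrFun hyu i
  have h2 : (0 : ℝ) ≤ u i := h1 ▸ mul_nonneg ht
    (nonneg_of_mem_newtonPoly (faceOf_subset_newtonPoly l hy) i)
  exact_mod_cast h2

lemma finite_facePoints {N : ℕ} (hN : ∀ j, Pi.single j N ∈ S) {l : Fin d → ℝ}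
    (hl : l ∈ dualPoly d S) {t : ℝ} (ht : 0 ≤ t) : (facePoints d S l t).Finite := by
  refine ((finite_setOf_dotProduct_le hN hl t).image fun v i => (v i : ℤ)).subset ?_
  intro u hu
  have hu0 : ∀ i, 0 ≤ u i := nonneg_of_mem_facePoints ht hu
  have hcast : expToReal d (fun i => (u i).toNat) = fun i => (u i : ℝ) := by
    ext i
    change ((u i).toNat : ℝ) = u i
    exact_mod_cast Int.toNat_of_nonneg (hu0 i)
  refine ⟨fun i => (u i).toNat, ?_, funext fun i => Int.toNat_of_nonneg (hu0 i)⟩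
  change l ⬝ᵥ expToReal d _ ≤ t
  rw [hcast]
  exact (dotProduct_eq_of_mem_smul_faceOf hu).le

lemma add_mem_facePoints {l : Fin d → ℝ} {s t : ℝ} (hs : 0 ≤ s) (ht : 0 ≤ t)
    {u v : Fin d → ℤ} (hu : u ∈ facePoints d S l s) (hv : v ∈ facePoints d S l t) :
    u + v ∈ facePoints d S l (s + t) := by
  change (fun i => ((u i + v i : ℤ) : ℝ)) ∈ (s + t) • faceOf d S l
  rw [faceOf, (convex_convexHull ℝ _).add_smul hs ht]
  exact ⟨_, hu, _, hv, by ext i; simp⟩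

/-- In the open orthant, the boundary of a dilate of the Newton polyhedron is the union of the
dilated compact facets. -/
lemma mem_smul_newtonPoly_diff_interior_iff_s1 (hd : 1 ≤ d)
    (hS : ∀ v ∈ S, ∀ w : Fin d → ℕ, v + w ∈ S) {N : ℕ} (hN : ∀ j, Pi.single j N ∈ S)
    {c : ℝ} (hc : 0 < c) {x : Fin d → ℝ} (hx : ∀ i, 0 < x i) :
    x ∈ c • newtonPoly d S \ interior (c • newtonPoly d S) ↔
      ∃ l ∈ facetFunctionals d S, x ∈ c • faceOf d S l := by
  rw [interior_smul₀ hc.ne', Set.mem_sdiff, Set.mem_smul_set_iff_inv_smul_mem₀ hc.ne',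
    Set.mem_smul_set_iff_inv_smul_mem₀ hc.ne']
  simp only [Set.mem_smul_set_iff_inv_smul_mem₀ hc.ne']
  constructor
  · rintro ⟨h1, h2⟩
    exact exists_facetFunctional hd hS hN (fun i => mul_pos (inv_pos.2 hc) (hx i)) h1 h2
  · rintro ⟨l, hl, hlx⟩
    refine ⟨faceOf_subset_newtonPoly l hlx, fun hint => ?_⟩
    set y := c⁻¹ • x
    have hcont : Tendsto (fun ε : ℝ => y - ε • (1 : Fin d → ℝ)) (nhdsWithin 0 (Set.Ioi 0))
        (nhds y) := by
      have : Continuous fun ε : ℝ => y - ε • (1 : Fin d → ℝ) := by fun_prop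
      simpa using (this.tendsto 0).mono_left nhdsWithin_le_nhds
    obtain ⟨ε, hε, hpos⟩ :=
      ((hcont.eventually (mem_interior_iff_mem_nhds.1 hint)).and self_mem_nhdsWithin).exists
    have h1 := one_le_dotProduct_of_mem_newtonPoly hl.1 hε
    rw [dotProduct_sub, dotProduct_eq_one_of_mem_faceOf hlx, dotProduct_smul, smul_eq_mul] at h1
    have h2 : 0 < l ⬝ᵥ (1 : Fin d → ℝ) := by
      rw [dotProduct_one]
      exact Finset.sum_pos (fun i _ => pos_of_mem_dualPoly hN hl.1 i) ⟨⟨0, hd⟩, Finset.mem_univ _⟩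
    have := mul_pos (Set.mem_Ioi.1 hpos) h2
    linarith

end Shift

section ShiftLimits

lemma tendsto_add_div_pow {f : ℕ → ℝ} {e : ℕ} {ρ : ℝ}
    (hf : Tendsto (fun n : ℕ => f n / (n : ℝ) ^ e) atTop (nhds ρ)) (K : ℕ) :
    Tendsto (fun n : ℕ => f (n + K) / (n : ℝ) ^ e) atTop (nhds ρ) := by
  have h1 := (tendsto_add_atTop_iff_nat K).2 hf
  have h2 := ((tendsto_natCast_div_add_atTop (K : ℝ)).inv₀ one_ne_zero).pow e
  have h3 := h1.mul h2
  rw [inv_one, one_pow, mul_one] at h3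
  refine h3.congr' ?_
  filter_upwards [eventually_gt_atTop 0] with n hn
  have hn' : (0 : ℝ) < n := by exact_mod_cast hn
  push_cast
  simp only [inv_pow, div_pow]
  field_simp

lemma tendsto_sub_div_pow {f : ℕ → ℝ} {e : ℕ} {ρ : ℝ}
    (hf : Tendsto (fun n : ℕ => f n / (n : ℝ) ^ e) atTop (nhds ρ)) (K : ℕ) :
    Tendsto (fun n : ℕ => f (n - K) / (n : ℝ) ^ e) atTop (nhds ρ) := by
  rw [← tendsto_add_atTop_iff_nat K]
  have h3 := hf.mul ((tendsto_natCast_div_add_atTop (K : ℝ)).pow e)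
  rw [one_pow, mul_one] at h3
  refine h3.congr' ?_
  filter_upwards [eventually_gt_atTop 0] with n hn
  have hn' : (0 : ℝ) < n := by exact_mod_cast hn
  rw [Nat.add_sub_cancel]
  push_cast
  rw [div_pow]
  field_simp

end ShiftLimits

section Sandwich

variable {d : ℕ} {S : Set (Fin d → ℕ)}

/-- The multiplicity counts integral points with positive coordinates on dilated facets. -/
lemma multJump_eq_ncard (hd : 1 ≤ d) (hS : ∀ v ∈ S, ∀ w : Fin d → ℕ, v + w ∈ S)
    {N : ℕ} (hN : ∀ j, Pi.single j N ∈ S) {c : ℝ} (hc : 0 < c) :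
    multJump d S c = {v : Fin d → ℕ | ∃ l ∈ facetFunctionals d S,
      (fun i => (v i : ℤ) + 1) ∈ facePoints d S l c}.ncard := by
  rw [multJump, Nat.card_coe_set_eq]
  congr 1
  ext v
  have hcast : expToReal d v + 1 = fun i => (((v i : ℤ) + 1 : ℤ) : ℝ) := by
    ext i; simp [expToReal]
  have hpos : ∀ i, 0 < (expToReal d v + 1) i := fun i => by
    simp only [expToReal, Pi.add_apply, Pi.one_apply]; positivity
  rw [Set.mem_ofPred_eq, mem_smul_newtonPoly_diff_interior_iff_s1 hd hS hN hc hpos, hcast]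
  rfl

/-- The facet functionals attaining the value `c` at an integral vector. -/
def activeFacets (d : ℕ) (S : Set (Fin d → ℕ)) (c : ℝ) : Set (Fin d → ℝ) :=
  {l ∈ facetFunctionals d S | ∃ u : Fin d → ℤ, l ⬝ᵥ (fun i => (u i : ℝ)) = c}

/-- An integral point on a dilated compact facet shows that the facet is active, for all
dilation factors differing by natural numbers. -/
lemma mem_activeFacets_of_mem_facePoints (hd : 1 ≤ d) {l : Fin d → ℝ}
    (hl : l ∈ facetFunctionals d S) {c : ℝ} {n : ℕ} {u : Fin d → ℤ}
    (hu : u ∈ facePoints d S l (c + n)) : l ∈ activeFacets d S c := by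
  obtain ⟨b, hb⟩ := exists_basis_mem_tightSet hl
  obtain ⟨w, hw, -⟩ := hb ⟨0, hd⟩
  refine ⟨hl, fun i => u i - n * w i, ?_⟩
  have hcast : (fun i => ((u i - n * w i : ℤ) : ℝ)) =
      (fun i => (u i : ℝ)) - (n : ℝ) • expToReal d w := by
    ext i; simp [expToReal]
  rw [hcast, dotProduct_sub, dotProduct_smul, hw.2, dotProduct_eq_of_mem_smul_faceOf hu]
  simp

lemma finite_preimage_facePoints {N : ℕ} (hN : ∀ j, Pi.single j N ∈ S) {l : Fin d → ℝ}
    (hl : l ∈ dualPoly d S) {t : ℝ} (ht : 0 ≤ t) :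
    {v : Fin d → ℕ | (fun i => (v i : ℤ) + 1) ∈ facePoints d S l t}.Finite :=
  (finite_facePoints hN hl ht).preimage fun v _ v' _ h => funext fun i => by
    have : (v i : ℤ) + 1 = v' i + 1 := congrFun h i
    omega

/-- The multiplicities are squeezed between sums of lattice point counts of dilated facets. -/
lemma exists_multJump_bounds (hd : 1 ≤ d) (hS : ∀ v ∈ S, ∀ w : Fin d → ℕ, v + w ∈ S)
    {N : ℕ} (hN : ∀ j, Pi.single j N ∈ S) {c : ℝ} (hc : 0 < c) [Fintype (activeFacets d S c)] :
    ∃ K : ℕ, ∀ n : ℕ,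
      multJump d S (c + n) ≤ ∑ l : activeFacets d S c, (facePoints d S l (n + K : ℕ)).ncard ∧
      (K ≤ n → ∑ l : activeFacets d S c, (facePoints d S l (n - K : ℕ)).ncard ≤
        multJump d S (c + n)) := by
  have hshift : ∀ l : activeFacets d S c, ∃ k₀ : ℕ, ∀ k : ℕ, k₀ ≤ k → ∃ p q : Fin d → ℤ,
      p ∈ facePoints d S l (c + (k * d : ℕ)) ∧ (∀ i, 0 < p i) ∧
      (∀ l' ∈ dualPoly d S, l' ≠ l →
        (l : Fin d → ℝ) ⬝ᵥ (fun i => (p i : ℝ)) < l' ⬝ᵥ (fun i => (p i : ℝ))) ∧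
      0 ≤ -c + (k * d : ℕ) ∧ q ∈ facePoints d S l (-c + (k * d : ℕ)) := by
    rintro ⟨l, hl, u, hu⟩
    obtain ⟨k₁, h₁⟩ := exists_shift_mem_facePoints hd hl u
    obtain ⟨k₂, h₂⟩ := exists_shift_mem_facePoints hd hl (-u)
    have hneg : l ⬝ᵥ (fun i => (((-u) i : ℤ) : ℝ)) = -c := by
      rw [← hu, ← dotProduct_neg]
      congr 1
      ext i; simp
    refine ⟨k₁ + k₂, fun k hk => ?_⟩
    obtain ⟨p, -, hp, hp0, hpl⟩ := h₁ k (by omega)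
    obtain ⟨q, hq0, hq, -, -⟩ := h₂ k (by omega)
    rw [hu] at hp
    rw [hneg] at hq hq0
    exact ⟨p, q, hp, hp0, hpl, hq0, hq⟩
  choose k₀ hk₀ using hshift
  have hk : ∀ l, k₀ l ≤ ∑ l, k₀ l := fun l =>
    Finset.single_le_sum (f := k₀) (fun _ _ => Nat.zero_le _) (Finset.mem_univ l)
  choose p q hp hp0 hpl hq0 hq using fun l => hk₀ l _ (hk l)
  generalize (∑ l, k₀ l) * d = K at hp hq0 hq
  refine ⟨K, fun n => ?_⟩
  have hcn : 0 < c + n := by positivity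
  rw [multJump_eq_ncard hd hS hN hcn]
  set A : activeFacets d S c → Set (Fin d → ℕ) := fun l =>
    {v | (fun i => (v i : ℤ) + 1) ∈ facePoints d S l (c + n)} with hA
  have hunion : {v : Fin d → ℕ | ∃ l ∈ facetFunctionals d S,
      (fun i => (v i : ℤ) + 1) ∈ facePoints d S l (c + n)} = ⋃ l, A l := by
    ext v
    simp only [Set.mem_ofPred_eq, Set.mem_iUnion, hA]
    constructor
    · rintro ⟨l, hl, hv⟩
      exact ⟨⟨l, mem_activeFacets_of_mem_facePoints hd hl hv⟩, hv⟩
    · rintro ⟨l, hv⟩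
      exact ⟨l, l.2.1, hv⟩
  have hAfin : ∀ l, (A l).Finite := fun l => finite_preimage_facePoints hN l.2.1.1 hcn.le
  rw [hunion]
  constructor
  · refine (Set.ncard_iUnion_le_of_fintype A).trans (Finset.sum_le_sum fun l _ => ?_)
    refine Set.ncard_le_ncard_of_injOn (fun v => (fun i => (v i : ℤ) + 1) + q l) ?_ ?_
      (finite_facePoints hN l.2.1.1 (Nat.cast_nonneg _))
    · intro v hv
      have := add_mem_facePoints hcn.le (hq0 l) hv (hq l)
      rwa [show c + n + (-c + K) = ((n + K : ℕ) : ℝ) by push_cast; ring] at this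
    · intro v _ v' _ h
      funext i
      have := congrFun h i
      simp only [Pi.add_apply] at this
      omega
  · intro hKn
    set D : activeFacets d S c → Set (Fin d → ℕ) := fun l =>
      {v | v ∈ A l ∧ ∀ l' ∈ dualPoly d S, l' ≠ l →
        c + n < l' ⬝ᵥ (fun i => (((v i : ℤ) + 1 : ℤ) : ℝ))} with hD
    have hDA : ∀ l, D l ⊆ A l := fun l v hv => hv.1
    have hdisj : Pairwise (Function.onFun Disjoint D) := by
      intro l l' hne
      refine Set.disjoint_left.2 fun v hv hv' => ?_
      have h1 := hv.2 l' l'.2.1.1 fun h => hne (Subtype.ext h.symm)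
      rw [dotProduct_eq_of_mem_smul_faceOf hv'.1] at h1
      exact lt_irrefl _ h1
    calc ∑ l : activeFacets d S c, (facePoints d S l (n - K : ℕ)).ncard
        ≤ ∑ l, (D l).ncard := Finset.sum_le_sum fun l _ => ?_
      _ = (⋃ l, D l).ncard := by
        rw [Set.ncard_iUnion_of_finite (fun l => (hAfin l).subset (hDA l)) hdisj,
          finsum_eq_sum_of_fintype]
      _ ≤ (⋃ l, A l).ncard :=
        Set.ncard_le_ncard (Set.iUnion_mono hDA) (Set.finite_iUnion hAfin)
    have hpos : ∀ u ∈ facePoints d S l (n - K : ℕ), ∀ i, 0 < u i + p l i := fun u hu i => by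
      have := nonneg_of_mem_facePoints (Nat.cast_nonneg _) hu i
      have := hp0 l i
      omega
    have hback : ∀ u ∈ facePoints d S l (n - K : ℕ),
        (fun i => (((u i + p l i - 1).toNat : ℕ) : ℤ) + 1) = u + p l := fun u hu => by
      funext i
      have := hpos u hu i
      simp only [Pi.add_apply]
      omega
    refine Set.ncard_le_ncard_of_injOn (fun u i => (u i + p l i - 1).toNat) ?_ ?_
      ((hAfin l).subset (hDA l))
    · intro u hu
      have hK0 : 0 ≤ c + (K : ℝ) := by positivity
      have hmem := add_mem_facePoints (Nat.cast_nonneg _) hK0 hu (hp l)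
      rw [show ((n - K : ℕ) : ℝ) + (c + K) = c + n by push_cast [hKn]; ring] at hmem
      refine ⟨?_, fun l' hl' hne => ?_⟩
      · change (fun i => (((u i + p l i - 1).toNat : ℕ) : ℤ) + 1) ∈ facePoints d S l (c + n)
        rw [hback u hu]
        exact hmem
      · have hrw : (fun i => (((((u i + p l i - 1).toNat : ℕ) : ℤ) + 1 : ℤ) : ℝ)) =
            (fun i => (u i : ℝ)) + fun i => (p l i : ℝ) := by
          funext i
          rw [congrFun (hback u hu) i]
          simp
        rw [hrw, dotProduct_add]
        have h1 := hpl l l' hl' hne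
        rw [dotProduct_eq_of_mem_smul_faceOf (hp l)] at h1
        have h2 : ((n - K : ℕ) : ℝ) ≤ l' ⬝ᵥ fun i => (u i : ℝ) := by
          obtain ⟨y, hy, hyu⟩ := hu
          have hyu : ((n - K : ℕ) : ℝ) • y = fun i => (u i : ℝ) := hyu
          rw [← hyu, dotProduct_smul, smul_eq_mul]
          exact le_mul_of_one_le_right (Nat.cast_nonneg _)
            (one_le_dotProduct_of_mem_newtonPoly hl' (faceOf_subset_newtonPoly _ hy))
        push_cast [hKn] at h2
        linarith
    · intro u hu u' hu' h
      have h1 : u + p l = u' + p l := by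
        rw [← hback u hu, ← hback u' hu']
        exact funext fun i => congrArg (fun m : ℕ => (m : ℤ) + 1) (congrFun h i)
      exact add_right_cancel h1

end Sandwich

/-- Corollary 5.4 (monomial case): for every jumping number `c` of a cofinite monomial
ideal `𝔞 ⊆ k[x₁,…,x_d]`, the sequence `m(c+n)/n^(d-1)` converges to a strictly positive
limit `ρ_c` (the Rees coefficient of `c` is positive). -/
theorem rees_coefficient_positive_of_monomial (d : ℕ) (hd : 1 ≤ d) (k : Type*) [Field k]
    (S : Set (Fin d → ℕ)) (hS : ∀ v ∈ S, ∀ w : Fin d → ℕ, v + w ∈ S)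
    (hcof : (Sᶜ : Set (Fin d → ℕ)).Finite)
    (c : ℚ) (hc : 0 < c) (hjump : 0 < multJump d S (c : ℝ)) :
    ∃ ρ : ℝ, 0 < ρ ∧
      Tendsto (fun n : ℕ => (multJump d S ((c : ℝ) + n) : ℝ) / (n : ℝ) ^ (d - 1))
        atTop (nhds ρ) := by
  have hc' : (0 : ℝ) < c := by exact_mod_cast hc
  obtain ⟨N, hN⟩ := exists_single_mem hcof
  have : Fintype (activeFacets d S c) :=
    ((finite_facetFunctionals hN).subset fun _ h => h.1).fintype
  have hne : Nonempty (activeFacets d S c) := by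
    rw [multJump_eq_ncard hd hS hN hc'] at hjump
    obtain ⟨v, l, hl, hv⟩ := Set.nonempty_of_ncard_ne_zero hjump.ne'
    exact ⟨l, mem_activeFacets_of_mem_facePoints (n := 0) hd hl (by simpa using hv)⟩
  choose ρ hρ hlim using fun l : activeFacets d S c =>
    exists_tendsto_ncard_facePoints hd hN l.2.1
  obtain ⟨K, hK⟩ := exists_multJump_bounds hd hS hN hc'
  refine ⟨∑ l, ρ l, Finset.sum_pos (fun l _ => hρ l) Finset.univ_nonempty, ?_⟩
  refine tendsto_of_tendsto_of_tendsto_of_le_of_le'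
    (tendsto_finsetSum Finset.univ fun l _ => tendsto_sub_div_pow (hlim l) K)
    (tendsto_finsetSum Finset.univ fun l _ => tendsto_add_div_pow (hlim l) K) ?_ ?_
  · filter_upwards [eventually_ge_atTop K] with n hn
    rw [← Finset.sum_div]
    gcongr
    exact_mod_cast (hK n).2 hn
  · refine Filter.Eventually.of_forall fun n => ?_
    rw [← Finset.sum_div]
    gcongr
    exact_mod_cast (hK n).1
end
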